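/- arXiv:2306.07008 — 7 statements merged into one kernel-verified Lean document; each statement's English description precedes it below -/
import Mathlib

section
/- For every positive integer N and every real ν, Σ_{k=0}^{N−1} sin(π(k + ν)/N)·cos(π(k + ν)/N)·D_N(k + ν)² = sin(2πν)/(2N). -/
/-- The Dirichlet kernel `D_N(ν) = (1/N) ∑_{m=0}^{N-1} cos(π ν (2m+1-N)/N)`. -/
noncomputable def dirichlet (N : ℕ) (ν : ℝ) : ℝ :=
  (1 / (N : ℝ)) * ∑ m ∈ Finset.range N,
    Real.cos (Real.pi * ν * (2 * (m : ℝ) + 1 - (N : ℝ)) / (N : ℝ))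

/-!
Write `x = πν/N`. Two forms of the closed formula for the kernel, `sin x · D_N(ν) = sin(πν)/N` and
`sin(πν) · D_N(ν) = (1/N) ∑_{m<N} sin((2m+1)x)`, turn the summand `sin x cos x D_N(ν)²` into a sine
polynomial in `2x` with frequencies `0, …, N`. Replacing `ν` by `k + ν` and summing over `k` kills
every frequency below `N`, so only the top term `sin(2Nx)/2 = sin(2πν)/2` survives.
-/

open Finset Real

theorem sum_sin_two_pi_mul_add_div_eq_zero {N : ℕ} {j : ℤ} (hj : ¬ (N : ℤ) ∣ j) (ν : ℝ) :
    ∑ k ∈ range N, sin (2 * π * j * (k + ν) / N) = 0 := by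
  rcases eq_or_ne N 0 with rfl | hN
  · simp
  have step_ne (l : ℤ) : 2 * π * j / N ≠ l * (2 * π) := by
    intro h
    refine hj ⟨l, ?_⟩
    have : (j : ℝ) = N * l := by
      field_simp at h
      linarith
    exact_mod_cast this
  have sin_half_period : sin (N * (2 * π * j / N) / 2) = 0 := by
    rw [← sin_int_mul_pi j]
    congr 1
    field_simp
  calc ∑ k ∈ range N, sin (2 * π * j * (k + ν) / N)
      = ∑ k ∈ range N, sin (2 * π * j / N * k + 2 * π * j / N * ν) := by
        refine sum_congr rfl fun k _ ↦ ?_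
        ring_nf
    _ = 0 := by rw [sum_sin N step_ne, sin_half_period, zero_mul, zero_div]

theorem cos_mul_sum_sin_odd_mul (n : ℕ) (x : ℝ) :
    cos x * ∑ m ∈ range n, sin ((2 * m + 1) * x) =
      ∑ j ∈ range n, sin (2 * j * x) + sin (2 * n * x) / 2 := by
  induction n with
  | zero => simp
  | succ n ih =>
    have product_to_sum : 2 * sin ((2 * n + 1) * x) * cos x =
        sin (2 * n * x) + sin (2 * (n + 1 : ℕ) * x) := by
      rw [two_mul_sin_mul_cos]
      push_cast
      ring_nf
    rw [sum_range_succ, sum_range_succ, mul_add, ih]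
    linarith

theorem sin_mul_sum_cos_centered (n : ℕ) (x : ℝ) :
    sin x * ∑ m ∈ range n, cos ((2 * m + 1 - n) * x) = sin (n * x) := by
  convert sin_mul_sum_cos n (2 * x) ((1 - n) * x) using 1
  · rw [mul_div_cancel_left₀ x two_ne_zero]
    congr! 3
    ring
  · rw [show (n - 1) * (2 * x) / 2 + (1 - n) * x = 0 by ring, cos_zero, mul_one]
    ring_nf

theorem sin_nat_mul_mul_sum_cos_centered (n : ℕ) (x : ℝ) :
    sin (n * x) * ∑ m ∈ range n, cos ((2 * m + 1 - n) * x) =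
      ∑ m ∈ range n, sin ((2 * m + 1) * x) := by
  have reflect : ∑ m ∈ range n, sin ((2 * (n - m : ℝ) - 1) * x) =
      ∑ m ∈ range n, sin ((2 * m + 1) * x) := by
    rw [← sum_range_reflect]
    refine sum_congr rfl fun m hm ↦ ?_
    rw [Nat.sub_sub, Nat.cast_sub (by grind)]
    push_cast
    ring_nf
  have product_to_sum (m : ℕ) : 2 * (sin (n * x) * cos ((2 * m + 1 - n) * x)) =
      sin ((2 * (n - m : ℝ) - 1) * x) + sin ((2 * m + 1) * x) := by
    rw [← mul_assoc, two_mul_sin_mul_cos]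
    ring_nf
  apply mul_left_cancel₀ (two_ne_zero' ℝ)
  simp_rw [mul_sum, product_to_sum, sum_add_distrib, reflect, ← mul_sum, two_mul]

theorem dirichlet_eq_sum_cos_div (N : ℕ) (ν : ℝ) :
    dirichlet N ν = (∑ m ∈ range N, cos ((2 * m + 1 - N) * (π * ν / N))) / N := by
  rw [dirichlet, one_div_mul_eq_div]
  congr! 3
  ring

theorem sin_pi_mul_div_mul_dirichlet {N : ℕ} (hN : N ≠ 0) (ν : ℝ) :
    sin (π * ν / N) * dirichlet N ν = sin (π * ν) / N := by
  rw [dirichlet_eq_sum_cos_div, ← mul_div_assoc, sin_mul_sum_cos_centered,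
    mul_div_cancel₀ _ (Nat.cast_ne_zero.mpr hN)]

theorem sin_pi_mul_mul_dirichlet {N : ℕ} (hN : N ≠ 0) (ν : ℝ) :
    sin (π * ν) * dirichlet N ν = (∑ m ∈ range N, sin ((2 * m + 1) * (π * ν / N))) / N := by
  rw [dirichlet_eq_sum_cos_div, ← mul_div_assoc, ← sin_nat_mul_mul_sum_cos_centered,
    mul_div_cancel₀ _ (Nat.cast_ne_zero.mpr hN)]

theorem sin_mul_cos_mul_dirichlet_sq {N : ℕ} (hN : N ≠ 0) (ν : ℝ) :
    sin (π * ν / N) * cos (π * ν / N) * dirichlet N ν ^ 2 =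
      (∑ j ∈ range N, sin (2 * π * j * ν / N) + sin (2 * π * ν) / 2) / N ^ 2 := by
  calc sin (π * ν / N) * cos (π * ν / N) * dirichlet N ν ^ 2
      = cos (π * ν / N) * (sin (π * ν / N) * dirichlet N ν) * dirichlet N ν := by ring
    _ = cos (π * ν / N) * (sin (π * ν) * dirichlet N ν) / N := by
      rw [sin_pi_mul_div_mul_dirichlet hN]
      ring
    _ = cos (π * ν / N) * (∑ m ∈ range N, sin ((2 * m + 1) * (π * ν / N))) / N ^ 2 := by
      rw [sin_pi_mul_mul_dirichlet hN]
      ring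
    _ = (∑ j ∈ range N, sin (2 * π * j * ν / N) + sin (2 * π * ν) / 2) / N ^ 2 := by
      rw [cos_mul_sum_sin_odd_mul, mul_assoc 2 (N : ℝ),
        mul_div_cancel₀ _ (Nat.cast_ne_zero.mpr hN), ← mul_assoc 2 π]
      congr! 4
      ring

/-- For every positive integer `N` and real `ν`,
`∑_{k=0}^{N-1} sin(π(k+ν)/N) cos(π(k+ν)/N) D_N(k+ν)² = sin(2πν)/(2N)`. -/
theorem sin_cos_dirichlet_sum (N : ℕ) (hN : 0 < N) (ν : ℝ) :
    ∑ k ∈ Finset.range N,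
      Real.sin (Real.pi * ((k : ℝ) + ν) / (N : ℝ)) *
        Real.cos (Real.pi * ((k : ℝ) + ν) / (N : ℝ)) * (dirichlet N ((k : ℝ) + ν))^2
      = Real.sin (2 * Real.pi * ν) / (2 * (N : ℝ)) := by
  have low_frequency_sum : ∀ j ∈ range N, ∑ k ∈ range N, sin (2 * π * j * (k + ν) / N) = 0 := by
    intro j hj
    rcases j.eq_zero_or_pos with rfl | hj0
    · simp
    · have hdvd : ¬ (N : ℤ) ∣ j :=
        mod_cast Nat.not_dvd_of_pos_of_lt hj0 (mem_range.mp hj)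
      exact_mod_cast sum_sin_two_pi_mul_add_div_eq_zero hdvd ν
  have top_frequency (k : ℕ) : sin (2 * π * (k + ν)) = sin (2 * π * ν) := by
    rw [← sin_add_nat_mul_two_pi (2 * π * ν) k]
    ring_nf
  simp_rw [sin_mul_cos_mul_dirichlet_sq hN.ne', ← sum_div, sum_add_distrib, top_frequency]
  rw [sum_comm, sum_eq_zero low_frequency_sum, sum_const, card_range, nsmul_eq_mul]
  field_simp
  ring
end

section
/- For every integer N ≥ 100 and every real ν with |ν| ≤ 2/5, one has ‖s_ν‖₂ ≥ 2|ν|. -/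
/-- The vector `s_ν ∈ ℝ^N`, `s_{ν,k} = sin(π_N (k+ν)) D_N(k+ν)` with `π_N = π(1-1/N)`. -/
noncomputable def sVec (N : ℕ) (ν : ℝ) (k : ℕ) : ℝ :=
  Real.sin (Real.pi * (1 - 1 / (N : ℝ)) * ((k : ℝ) + ν)) * dirichlet N ((k : ℝ) + ν)

/-!
Put `t = π (k + ν) / N`. The unnormalized kernel `U n t = ∑_{m < n} cos ((2m + 1 - n) t)` satisfies
`U (n + 1) t = cos t * U n t + cos (n t)` and hence `sin t * U n t = sin (n t)`. Together these give
`sin ((N - 1) t) * U N t = sin (N t) * U (N - 1) t`, also where `sin t = 0`, so `s_{ν,k}` equals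
`± sin (π ν) / N` times a sample of the kernel of order `N - 1`. As `|U n t|` is the modulus of
`∑_{m < n} e^{2imt}`, Parseval for the discrete Fourier transform gives
`‖s_ν‖₂² = (1 - 1/N) sin² (π ν)`, and concavity of the sine bounds this from below by `4 ν²`.
-/

section

open Finset Real
open scoped ComplexConjugate

/-- The unnormalized Dirichlet kernel of order `n`, in the angular variable `t = π ν / n`: avoiding
the division by `n` makes kernels of different orders comparable at the same point. -/
noncomputable def dirichletSum (n : ℕ) (t : ℝ) : ℝ :=
  ∑ m ∈ range n, cos ((2 * m + 1 - n) * t)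

theorem dirichlet_eq_dirichletSum_div (N : ℕ) (ν : ℝ) :
    dirichlet N ν = dirichletSum N (π * ν / N) / N := by
  rw [dirichlet, dirichletSum, one_div_mul_eq_div]
  congr! 3 with m
  ring

theorem sum_range_sin_symmetric (n : ℕ) (t : ℝ) :
    ∑ m ∈ range n, sin ((2 * m + 1 - n) * t) = 0 := by
  have reflect : ∑ m ∈ range n, sin ((2 * m + 1 - n) * t) =
      -∑ m ∈ range n, sin ((2 * m + 1 - n) * t) := by
    rw [← sum_neg_distrib, ← sum_range_reflect]
    refine sum_congr rfl fun m hm => ?_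
    have hm' : m + 1 ≤ n := mem_range.mp hm
    rw [← sin_neg, Nat.sub_sub, Nat.add_comm 1 m, Nat.cast_sub hm']
    congr 1
    push_cast
    ring
  linarith

theorem dirichletSum_succ (n : ℕ) (t : ℝ) :
    dirichletSum (n + 1) t = cos t * dirichletSum n t + cos (n * t) := by
  have shift (m : ℕ) : cos ((2 * m + 1 - (n + 1 : ℕ)) * t) =
      cos t * cos ((2 * m + 1 - n) * t) + sin t * sin ((2 * m + 1 - n) * t) := by
    rw [← cos_sub, ← cos_neg]
    congr 1
    push_cast
    ring
  have last : cos ((2 * n + 1 - (n + 1 : ℕ)) * t) = cos (n * t) := by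
    congr 1
    push_cast
    ring
  rw [dirichletSum, sum_range_succ, last, sum_congr rfl fun m _ => shift m, sum_add_distrib,
    ← mul_sum, ← mul_sum, sum_range_sin_symmetric, mul_zero, add_zero, dirichletSum]

theorem sin_mul_dirichletSum (n : ℕ) (t : ℝ) : sin t * dirichletSum n t = sin (n * t) := by
  induction n with
  | zero => simp [dirichletSum]
  | succ n ih =>
    rw [Nat.cast_succ, add_one_mul, sin_add, ← ih, dirichletSum_succ]
    ring

theorem sin_mul_dirichletSum_succ (n : ℕ) (t : ℝ) :
    sin (n * t) * dirichletSum (n + 1) t = sin ((n + 1 : ℕ) * t) * dirichletSum n t := by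
  rw [Nat.cast_succ, add_one_mul, sin_add, dirichletSum_succ, ← sin_mul_dirichletSum]
  ring

theorem norm_sum_exp_eq_abs_dirichletSum (n : ℕ) (t : ℝ) :
    ‖∑ m ∈ range n, Complex.exp ((2 * m * t : ℝ) * Complex.I)‖ = |dirichletSum n t| := by
  have center (m : ℕ) : Complex.exp ((2 * m * t : ℝ) * Complex.I) =
      Complex.exp (((n - 1) * t : ℝ) * Complex.I) *
        (cos ((2 * m + 1 - n) * t) + sin ((2 * m + 1 - n) * t) * Complex.I) := by
    rw [Complex.ofReal_cos, Complex.ofReal_sin, ← Complex.exp_mul_I, ← Complex.exp_add]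
    congr 1
    push_cast
    ring
  have real_sum : ∑ m ∈ range n,
      ((cos ((2 * m + 1 - n) * t) : ℂ) + sin ((2 * m + 1 - n) * t) * Complex.I) =
      dirichletSum n t := by
    rw [sum_add_distrib, ← sum_mul, ← Complex.ofReal_sum, ← Complex.ofReal_sum,
      sum_range_sin_symmetric, Complex.ofReal_zero, zero_mul, add_zero, dirichletSum]
  rw [sum_congr rfl fun m _ => center m, ← mul_sum, real_sum, norm_mul,
    Complex.norm_exp_ofReal_mul_I, one_mul, Complex.norm_real, norm_eq_abs]

theorem sum_pow_mul_inv_pow_of_isPrimitiveRoot {K : Type*} [Field K] {ζ : K} {N : ℕ}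
    (hζ : IsPrimitiveRoot ζ N) {i j : ℕ} (hi : i < N) (hj : j < N) :
    ∑ k ∈ range N, (ζ ^ i * (ζ ^ j)⁻¹) ^ k = if i = j then (N : K) else 0 := by
  have hζj : ζ ^ j ≠ 0 := pow_ne_zero j (hζ.ne_zero (by lia))
  split_ifs with hij
  · simp [hij, mul_inv_cancel₀ hζj]
  · have ne_one : ζ ^ i * (ζ ^ j)⁻¹ ≠ 1 := fun h =>
      hij (hζ.pow_inj hi hj ((mul_inv_eq_one₀ hζj).mp h))
    have pow_eq_one : (ζ ^ i * (ζ ^ j)⁻¹) ^ N = 1 := by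
      rw [mul_pow, inv_pow, pow_right_comm ζ i, pow_right_comm ζ j, hζ.pow_eq_one]
      simp only [one_pow, inv_one, mul_one]
    rw [geom_sum_eq ne_one, pow_eq_one, sub_self, zero_div]

theorem sum_norm_sq_dft_of_isPrimitiveRoot {ζ : ℂ} {N : ℕ} (hζ : IsPrimitiveRoot ζ N)
    {s : Finset ℕ} (hs : s ⊆ range N) (a : ℕ → ℂ) :
    ∑ k ∈ range N, ‖∑ m ∈ s, a m * (ζ ^ m) ^ k‖ ^ 2 = N * ∑ m ∈ s, ‖a m‖ ^ 2 := by
  have lt_of_mem {m : ℕ} (hm : m ∈ s) : m < N := mem_range.mp (hs hm)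
  have conj_pow {j : ℕ} (hj : j ∈ s) : conj (ζ ^ j) = (ζ ^ j)⁻¹ := by
    have := lt_of_mem hj
    exact (Complex.inv_eq_conj (by rw [norm_pow, hζ.norm'_eq_one (by lia), one_pow])).symm
  have expand (k : ℕ) : (‖∑ m ∈ s, a m * (ζ ^ m) ^ k‖ ^ 2 : ℂ) =
      ∑ i ∈ s, ∑ j ∈ s, a i * conj (a j) * (ζ ^ i * (ζ ^ j)⁻¹) ^ k := by
    rw [← Complex.mul_conj', map_sum, sum_mul_sum]
    refine sum_congr rfl fun i _ => sum_congr rfl fun j hj => ?_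
    rw [map_mul, map_pow _ (ζ ^ j), conj_pow hj, mul_pow (ζ ^ i)]
    ring
  rw [← Complex.ofReal_inj]
  push_cast
  calc ∑ k ∈ range N, (‖∑ m ∈ s, a m * (ζ ^ m) ^ k‖ ^ 2 : ℂ)
      = ∑ i ∈ s, ∑ j ∈ s, a i * conj (a j) * ∑ k ∈ range N, (ζ ^ i * (ζ ^ j)⁻¹) ^ k := by
        simp_rw [expand, mul_sum]
        rw [sum_comm]
        exact sum_congr rfl fun i _ => sum_comm
    _ = ∑ i ∈ s, ∑ j ∈ s, a i * conj (a j) * if i = j then (N : ℂ) else 0 :=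
        sum_congr rfl fun i hi => sum_congr rfl fun j hj => by
          rw [sum_pow_mul_inv_pow_of_isPrimitiveRoot hζ (lt_of_mem hi) (lt_of_mem hj)]
    _ = ∑ i ∈ s, (‖a i‖ ^ 2 : ℂ) * N :=
        sum_congr rfl fun i hi => by
          simp only [mul_ite, mul_zero, sum_ite_eq, if_pos hi, Complex.mul_conj']
    _ = N * ∑ m ∈ s, (‖a m‖ ^ 2 : ℂ) := by rw [← sum_mul, mul_comm]

theorem sum_dirichletSum_sq {n N : ℕ} (hN : N ≠ 0) (hn : n ≤ N) (ν : ℝ) :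
    ∑ k ∈ range N, dirichletSum n (π * (k + ν) / N) ^ 2 = N * n := by
  set ζ := Complex.exp (2 * π * Complex.I / N)
  let a (m : ℕ) : ℂ := Complex.exp ((2 * m * (π * ν / N) : ℝ) * Complex.I)
  have exp_eq (m k : ℕ) : Complex.exp ((2 * m * (π * (k + ν) / N) : ℝ) * Complex.I) =
      a m * (ζ ^ m) ^ k := by
    rw [← Complex.exp_nat_mul, ← Complex.exp_nat_mul, ← Complex.exp_add]
    congr 1
    push_cast
    ring
  calc ∑ k ∈ range N, dirichletSum n (π * (k + ν) / N) ^ 2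
      = ∑ k ∈ range N, ‖∑ m ∈ range n, a m * (ζ ^ m) ^ k‖ ^ 2 := by
        simp_rw [← exp_eq, norm_sum_exp_eq_abs_dirichletSum, sq_abs]
    _ = N * ∑ m ∈ range n, ‖a m‖ ^ 2 :=
        sum_norm_sq_dft_of_isPrimitiveRoot (Complex.isPrimitiveRoot_exp N hN)
          (range_subset_range.mpr hn) a
    _ = N * n := by simp [a, -Complex.ofReal_mul]

theorem sVec_succ (n : ℕ) (ν : ℝ) (k : ℕ) :
    sVec (n + 1) ν k =
      sin (π * (k + ν)) / (n + 1 : ℕ) * dirichletSum n (π * (k + ν) / (n + 1 : ℕ)) := by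
  set t := π * (k + ν) / (n + 1 : ℕ) with ht
  have order_n : π * (1 - 1 / (n + 1 : ℕ)) * (k + ν) = n * t := by
    rw [ht]
    push_cast
    field_simp
    ring
  have order_succ : π * (k + ν) = (n + 1 : ℕ) * t := by
    rw [ht]
    field_simp
  rw [sVec, dirichlet_eq_dirichletSum_div, ← ht, order_n, order_succ, ← mul_div_assoc,
    sin_mul_dirichletSum_succ, div_mul_eq_mul_div]

theorem sum_sVec_sq {N : ℕ} (hN : N ≠ 0) (ν : ℝ) :
    ∑ k ∈ range N, sVec N ν k ^ 2 = (1 - 1 / N) * sin (π * ν) ^ 2 := by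
  obtain ⟨n, rfl⟩ := Nat.exists_eq_succ_of_ne_zero hN
  have sin_sq_shift (k : ℕ) : sin (π * (k + ν)) ^ 2 = sin (π * ν) ^ 2 := by
    rw [mul_add, add_comm, mul_comm π k, sin_add_nat_mul_pi, mul_pow, ← pow_mul, mul_comm k,
      pow_mul, neg_one_sq, one_pow, one_mul]
  simp_rw [Nat.succ_eq_add_one, sVec_succ, mul_pow, div_pow, sin_sq_shift]
  rw [← mul_sum, sum_dirichletSum_sq n.succ_ne_zero n.le_succ]
  push_cast
  field_simp
  ring

theorem mul_sin_le_mul_sin {x a : ℝ} (hx : 0 ≤ x) (hxa : x ≤ a) (ha : a ≤ π) :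
    x * sin a ≤ a * sin x := by
  obtain rfl | ha₀ := (hx.trans hxa).eq_or_lt
  · simp [le_antisymm hxa hx]
  have chord := strictConcaveOn_sin_Icc.concaveOn.2 (x := a) (y := 0) ⟨ha₀.le, ha⟩
    ⟨le_rfl, pi_nonneg⟩ (div_nonneg hx ha₀.le) (sub_nonneg.mpr ((div_le_one ha₀).mpr hxa))
    (add_sub_cancel _ _)
  simp only [smul_eq_mul, sin_zero, mul_zero, add_zero, div_mul_cancel₀ x ha₀.ne'] at chord
  rwa [div_mul_eq_mul_div, div_le_iff₀' ha₀] at chord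

theorem mul_le_sin_pi_mul {x : ℝ} (hx₀ : 0 ≤ x) (hx : x ≤ 2 / 5) : 19 / 8 * x ≤ sin (π * x) := by
  have sin_endpoint : 19 / 20 ≤ sin (π * (2 / 5)) := by
    calc (19 / 20 : ℝ) ≤ 1 - (π / 10) ^ 2 / 2 := by nlinarith [pi_pos, pi_lt_d2]
      _ ≤ cos (π / 10) := one_sub_sq_div_two_le_cos
      _ = sin (π * (2 / 5)) := by
        rw [← sin_pi_div_two_sub]
        ring_nf
  have chord := mul_sin_le_mul_sin (mul_nonneg pi_nonneg hx₀)
    (mul_le_mul_of_nonneg_left hx pi_nonneg) (by linarith [pi_pos])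
  rw [mul_assoc, mul_assoc, mul_le_mul_iff_right₀ pi_pos] at chord
  linarith [mul_le_mul_of_nonneg_left sin_endpoint hx₀]

theorem sVec_l2_lower_bound_general (N : ℕ) (hN : 4 ≤ N) (ν : ℝ) (hν : |ν| ≤ 2 / 5) :
    2 * |ν| ≤ √(∑ k ∈ range N, sVec N ν k ^ 2) := by
  have sin_sq_abs : sin (π * ν) ^ 2 = sin (π * |ν|) ^ 2 := by
    obtain h | h := abs_choice ν <;> simp [h]
  have prefactor : (3 / 4 : ℝ) ≤ 1 - 1 / N := by
    have : 1 / (N : ℝ) ≤ 1 / 4 := one_div_le_one_div_of_le four_pos (mod_cast hN)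
    linarith
  apply le_sqrt_of_sq_le
  rw [sum_sVec_sq (by lia), sin_sq_abs]
  calc (2 * |ν|) ^ 2 ≤ 3 / 4 * (19 / 8 * |ν|) ^ 2 := by nlinarith [sq_nonneg |ν|]
    _ ≤ (1 - 1 / N) * sin (π * |ν|) ^ 2 := by
      gcongr
      exact mul_le_sin_pi_mul (abs_nonneg ν) hν

end

/-- For every integer `N ≥ 100` and real `ν` with `|ν| ≤ 2/5`, `‖s_ν‖₂ ≥ 2|ν|`. -/
theorem sVec_l2_lower_bound (N : ℕ) (hN : 100 ≤ N) (ν : ℝ) (hν : |ν| ≤ 2 / 5) :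
    2 * |ν| ≤ Real.sqrt (∑ k ∈ Finset.range N, (sVec N ν k)^2) := by
  exact sVec_l2_lower_bound_general N (by lia) ν hν
end

section
/- For every positive integer N, every real ν, and all distinct integers n, m ∈ {0,…,N−1}, one has Σ_{k=0}^{N−1} sin(π_N(k − n + ν))·D_N(k − n + ν)·sin(π_N(k − m + ν))·D_N(k − m + ν) = −sin²(πν)/N. -/
/-!
With `g(x) = ∑_{j<N} e^{2πijx/N}`, centring the exponents gives `sin(π_N x) D_N(x) = Im g(x) / N`.
Reversing the geometric sum gives `g(y) = w g(-y) + 1 - w` with `w = e^{2πiy}`, and `w` does not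
change when `y` moves by an integer. Hence in `2 Im g(x) Im g(y) = Re (g(x) g(-y) - g(x) g(y))` both
products, summed over the shifts `x = k + a`, `y = k + b` for `k < N`, come down to the mean
`∑ g(k + a) = N` and the orthogonality relation `∑ g(k + a) g(-(k + b)) = N g(a - b)`, whose right
side vanishes when `a - b` is an integer not divisible by `N`.
-/

section

open Complex Finset
open scoped ComplexConjugate FourierTransform Real

/-- The one-sided exponential sum `∑_{j<N} e^{2πijx/N}`, the Dirichlet kernel `D_N(x)` up to the
factor `N` and a phase. With the exponents not centred, it is `N`-periodic for either parity of
`N`. -/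
noncomputable def expSum (N : ℕ) (x : ℝ) : ℂ :=
  ∑ j ∈ range N, (𝐞 (j * x / N) : ℂ)

lemma fourierChar_eq_one_iff {x : ℝ} : 𝐞 x = 1 ↔ ∃ n : ℤ, x = n := by
  rw [Real.fourierChar_apply', Circle.exp_eq_one]
  refine exists_congr fun n ↦ ?_
  rw [mul_comm, mul_left_inj' Real.two_pi_pos.ne']

lemma fourierChar_intCast_add (n : ℤ) (x : ℝ) : 𝐞 (n + x) = 𝐞 x := by
  rw [AddChar.map_add_eq_mul, fourierChar_eq_one_iff.mpr ⟨n, rfl⟩, one_mul]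

lemma re_fourierChar (x : ℝ) : (𝐞 x : ℂ).re = Real.cos (2 * π * x) := by
  rw [Real.fourierChar_apply, exp_ofReal_mul_I_re]

lemma im_fourierChar (x : ℝ) : (𝐞 x : ℂ).im = Real.sin (2 * π * x) := by
  rw [Real.fourierChar_apply, exp_ofReal_mul_I_im]

lemma expSum_eq_geom_sum (N : ℕ) (x : ℝ) :
    expSum N x = ∑ j ∈ range N, (𝐞 (x / N) : ℂ) ^ j := by
  refine sum_congr rfl fun j _ ↦ ?_
  rw [mul_div_assoc, ← nsmul_eq_mul, AddChar.map_nsmul_eq_pow, Circle.coe_pow]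

lemma conj_expSum (N : ℕ) (x : ℝ) : conj (expSum N x) = expSum N (-x) := by
  rw [expSum, expSum, map_sum]
  refine sum_congr rfl fun j _ ↦ ?_
  rw [Circle.starRingEnd_addChar, mul_neg, neg_div]

lemma expSum_eq_fourierChar_mul_expSum_neg {N : ℕ} (hN : N ≠ 0) (x : ℝ) :
    expSum N x = 𝐞 x * expSum N (-x) + 1 - 𝐞 x := by
  have reversed : 𝐞 x * expSum N (-x) = ∑ j ∈ range N, (𝐞 ((j + 1 : ℕ) * x / N) : ℂ) := by
    rw [← sum_range_reflect, expSum, mul_sum]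
    refine sum_congr rfl fun j hj ↦ ?_
    rw [← Circle.coe_mul, ← AddChar.map_add_eq_mul]
    have reflected_index : N - 1 - j + 1 = N - j := by
      have := mem_range.mp hj
      omega
    rw [reflected_index, Nat.cast_sub (mem_range.mp hj).le]
    congr 2
    field_simp
    ring
  have shift := sum_range_succ' (fun j : ℕ ↦ (𝐞 (j * x / N) : ℂ)) N
  rw [sum_range_succ, ← reversed, mul_div_cancel_left₀ x (Nat.cast_ne_zero.mpr hN)] at shift
  simp only [Nat.cast_zero, zero_mul, zero_div, AddChar.map_zero_eq_one, Circle.coe_one] at shift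
  rw [← shift, expSum, add_sub_cancel_right]

lemma expSum_zero (N : ℕ) : expSum N 0 = N := by simp [expSum]

lemma expSum_intCast_of_not_dvd {N : ℕ} {p : ℤ} (hp : ¬ (N : ℤ) ∣ p) : expSum N p = 0 := by
  rcases eq_or_ne N 0 with rfl | hN
  · simp [expSum]
  have hN' : (N : ℝ) ≠ 0 := Nat.cast_ne_zero.mpr hN
  have root_ne_one : (𝐞 (p / N : ℝ) : ℂ) ≠ 1 := by
    rw [Ne, Circle.coe_eq_one, fourierChar_eq_one_iff]
    rintro ⟨q, hq⟩
    rw [div_eq_iff hN'] at hq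
    exact hp ⟨q, by rw [mul_comm]; exact_mod_cast hq⟩
  have root_pow : (𝐞 (p / N : ℝ) : ℂ) ^ N = 1 := by
    rw [← Circle.coe_pow, ← AddChar.map_nsmul_eq_pow, nsmul_eq_mul, mul_div_cancel₀ _ hN',
      Circle.coe_eq_one, fourierChar_eq_one_iff]
    exact ⟨p, rfl⟩
  rw [expSum_eq_geom_sum, geom_sum_eq root_ne_one, root_pow, sub_self, zero_div]

lemma expSum_natCast_sub_natCast {N j l : ℕ} (hj : j < N) (hl : l < N) :
    expSum N (j - l) = if j = l then (N : ℂ) else 0 := by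
  split_ifs with h
  · rw [h, sub_self, expSum_zero]
  · have not_dvd : ¬ (N : ℤ) ∣ j - l := fun hdvd ↦ by
      have := Int.eq_zero_of_abs_lt_dvd hdvd (by rw [abs_lt]; omega)
      omega
    exact_mod_cast expSum_intCast_of_not_dvd not_dvd

lemma expSum_natCast {N j : ℕ} (hj : j < N) : expSum N j = if j = 0 then (N : ℂ) else 0 := by
  simpa using expSum_natCast_sub_natCast hj (Nat.zero_lt_of_lt hj)

lemma sum_expSum_natCast_add (N : ℕ) (a : ℝ) :
    ∑ k ∈ range N, expSum N (k + a) = N := by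
  have factor (j k : ℕ) : (𝐞 (j * (k + a) / N) : ℂ) = 𝐞 (j * a / N) * 𝐞 (k * j / N) := by
    rw [← Circle.coe_mul, ← AddChar.map_add_eq_mul]
    congr 2
    ring
  calc ∑ k ∈ range N, expSum N (k + a)
      = ∑ j ∈ range N, (𝐞 (j * a / N) : ℂ) * expSum N j := by
        simp only [expSum, factor, mul_sum]
        exact sum_comm
    _ = ∑ j ∈ range N, (𝐞 (j * a / N) : ℂ) * if j = 0 then (N : ℂ) else 0 :=
        sum_congr rfl fun j hj ↦ by rw [expSum_natCast (mem_range.mp hj)]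
    _ = N := by
        rcases eq_or_ne N 0 with rfl | hN <;> simp [*]

lemma sum_expSum_mul_expSum_neg (N : ℕ) (a b : ℝ) :
    ∑ k ∈ range N, expSum N (k + a) * expSum N (-(k + b)) = N * expSum N (a - b) := by
  have factor (j l k : ℕ) : (𝐞 (j * (k + a) / N) * 𝐞 (l * -(k + b) / N) : ℂ) =
      𝐞 ((j * a - l * b) / N) * 𝐞 (k * (j - l) / N) := by
    simp only [← Circle.coe_mul, ← AddChar.map_add_eq_mul]
    congr 2
    ring
  calc ∑ k ∈ range N, expSum N (k + a) * expSum N (-(k + b))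
      = ∑ j ∈ range N, ∑ l ∈ range N, (𝐞 ((j * a - l * b) / N) : ℂ) * expSum N (j - l) := by
        simp only [expSum, sum_mul_sum, factor]
        rw [sum_comm]
        refine sum_congr rfl fun j _ ↦ ?_
        rw [sum_comm]
        simp only [mul_sum]
    _ = ∑ j ∈ range N, ∑ l ∈ range N,
          (𝐞 ((j * a - l * b) / N) : ℂ) * if j = l then (N : ℂ) else 0 :=
        sum_congr rfl fun j hj ↦ sum_congr rfl fun l hl ↦ by
          rw [expSum_natCast_sub_natCast (mem_range.mp hj) (mem_range.mp hl)]
    _ = ∑ j ∈ range N, (N : ℂ) * 𝐞 (j * (a - b) / N) :=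
        sum_congr rfl fun j hj ↦ by
          simp only [mul_ite, mul_zero, sum_ite_eq, hj, if_true]
          rw [mul_comm, mul_sub]
    _ = N * expSum N (a - b) := (mul_sum ..).symm

lemma sum_expSum_mul_expSum (N : ℕ) (a b : ℝ) :
    ∑ k ∈ range N, expSum N (k + a) * expSum N (k + b) =
      N * (𝐞 b * expSum N (a - b) + 1 - 𝐞 b) := by
  rcases eq_or_ne N 0 with rfl | hN
  · simp
  have reflect (k : ℕ) : expSum N (k + a) * expSum N (k + b) =
      𝐞 b * (expSum N (k + a) * expSum N (-(k + b))) + (1 - 𝐞 b) * expSum N (k + a) := by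
    have periodic : 𝐞 (k + b) = 𝐞 b := mod_cast fourierChar_intCast_add k b
    rw [expSum_eq_fourierChar_mul_expSum_neg hN (k + b), periodic]
    ring
  simp only [reflect, sum_add_distrib, ← mul_sum, sum_expSum_mul_expSum_neg,
    sum_expSum_natCast_add]
  ring

lemma im_mul_im (z w : ℂ) : z.im * w.im = (z * conj w - z * w).re / 2 := by
  simp only [sub_re, mul_re, conj_re, conj_im]
  ring

lemma sum_im_expSum_mul_im_expSum (N : ℕ) (a b : ℝ) :
    ∑ k ∈ range N, (expSum N (k + a)).im * (expSum N (k + b)).im =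
      N / 2 * ((1 - 𝐞 b) * (expSum N (a - b) - 1)).re := by
  simp only [im_mul_im, conj_expSum, ← sum_div, ← re_sum, sum_sub_distrib,
    sum_expSum_mul_expSum_neg, sum_expSum_mul_expSum]
  rw [← mul_sub, ← ofReal_natCast, re_ofReal_mul, mul_div_right_comm]
  congr 2
  ring

lemma sum_sin_mul_centered_eq_zero (N : ℕ) (t : ℝ) :
    ∑ j ∈ range N, Real.sin (t * (2 * j + 1 - N)) = 0 := by
  have odd : ∑ j ∈ range N, Real.sin (t * (2 * j + 1 - N)) =
      -∑ j ∈ range N, Real.sin (t * (2 * j + 1 - N)) := by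
    rw [← sum_neg_distrib, ← sum_range_reflect]
    refine sum_congr rfl fun j hj ↦ ?_
    rw [Nat.sub_sub, Nat.cast_sub (by have := mem_range.mp hj; omega), ← Real.sin_neg]
    push_cast
    ring_nf
  linarith

lemma expSum_eq_fourierChar_mul_dirichlet (N : ℕ) (x : ℝ) :
    expSum N x = 𝐞 ((1 - 1 / N) * x / 2) * (N * dirichlet N x : ℝ) := by
  rcases eq_or_ne N 0 with rfl | hN
  · simp [expSum]
  have hN' : (N : ℝ) ≠ 0 := Nat.cast_ne_zero.mpr hN
  have centered : ∑ j ∈ range N, (𝐞 (x * (2 * j + 1 - N) / (2 * N)) : ℂ) =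
      (N * dirichlet N x : ℝ) := by
    have angle (j : ℕ) : 2 * π * (x * (2 * j + 1 - N) / (2 * N)) =
        π * x / N * (2 * j + 1 - N) := by
      field_simp
    apply Complex.ext
    · rw [re_sum, ofReal_re, dirichlet, ← mul_assoc, mul_one_div_cancel hN', one_mul]
      simp only [re_fourierChar, angle, div_mul_eq_mul_div]
    · rw [im_sum, ofReal_im]
      simp only [im_fourierChar, angle, sum_sin_mul_centered_eq_zero]
  rw [← centered, mul_sum]
  refine sum_congr rfl fun j _ ↦ ?_
  rw [← Circle.coe_mul, ← AddChar.map_add_eq_mul]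
  congr 2
  field_simp
  ring

lemma sin_mul_dirichlet {N : ℕ} (hN : N ≠ 0) (x : ℝ) :
    Real.sin (π * (1 - 1 / N) * x) * dirichlet N x = (expSum N x).im / N := by
  rw [expSum_eq_fourierChar_mul_dirichlet, im_mul_ofReal, im_fourierChar,
    eq_div_iff (Nat.cast_ne_zero.mpr hN)]
  ring_nf

lemma one_sub_re_fourierChar (x : ℝ) : 1 - (𝐞 x : ℂ).re = 2 * Real.sin (π * x) ^ 2 := by
  rw [re_fourierChar, mul_assoc, Real.cos_two_mul, Real.cos_sq']
  ring

theorem dirichlet_cross_term_general (N : ℕ) (hN : 0 < N) (ν : ℝ) (n m : ℤ)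
    (hnm : ¬ n ≡ m [ZMOD N]) :
    ∑ k ∈ range N,
      (Real.sin (π * (1 - 1 / N) * (k - n + ν)) * dirichlet N (k - n + ν)) *
      (Real.sin (π * (1 - 1 / N) * (k - m + ν)) * dirichlet N (k - m + ν)) =
      -(Real.sin (π * ν)) ^ 2 / N := by
  have hN' : (N : ℝ) ≠ 0 := Nat.cast_ne_zero.mpr hN.ne'
  have orthogonal : expSum N (ν - n - (ν - m)) = 0 := by
    rw [sub_sub_sub_cancel_left]
    exact_mod_cast expSum_intCast_of_not_dvd (mt Int.modEq_iff_dvd.mpr hnm)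
  have periodic : 𝐞 (ν - m) = 𝐞 ν := by
    rw [← fourierChar_intCast_add m, add_sub_cancel]
  simp only [sin_mul_dirichlet hN.ne', sub_add_eq_add_sub, add_sub_assoc, div_mul_div_comm,
    ← sum_div]
  rw [sum_im_expSum_mul_im_expSum, orthogonal, zero_sub, mul_neg_one, neg_re, sub_re,
    one_re, periodic, one_sub_re_fourierChar]
  field_simp

end

/-- For every positive integer `N`, real `ν`, and distinct `n, m ∈ {0,…,N−1}`,
`∑_{k=0}^{N-1} sin(π_N(k-n+ν)) D_N(k-n+ν) sin(π_N(k-m+ν)) D_N(k-m+ν) = −sin²(πν)/N`,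
where `π_N = π(1-1/N)`. -/
theorem dirichlet_cross_term (N : ℕ) (hN : 0 < N) (ν : ℝ) (n m : ℕ)
    (hn : n < N) (hm : m < N) (hnm : n ≠ m) :
    ∑ k ∈ Finset.range N,
      (Real.sin (Real.pi * (1 - 1 / (N : ℝ)) * ((k : ℝ) - (n : ℝ) + ν)) *
          dirichlet N ((k : ℝ) - (n : ℝ) + ν)) *
      (Real.sin (Real.pi * (1 - 1 / (N : ℝ)) * ((k : ℝ) - (m : ℝ) + ν)) *
          dirichlet N ((k : ℝ) - (m : ℝ) + ν))
      = -(Real.sin (Real.pi * ν))^2 / (N : ℝ) := by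
  exact_mod_cast dirichlet_cross_term_general N hN ν n m fun h ↦
    hnm ((Int.natCast_modEq_iff.mp h).eq_of_lt_of_lt hn hm)
end

section
/- Fix a positive integer N and a real ν. Then Σ_{k=0}^{N−1} s_{ν,k} = 0 and Σ_{k=0}^{N−1} c_{ν,k} = 1, and for every integer t with 1 ≤ t ≤ N − 1: Σ_{k=0}^{N−1} exp(−2πi·k·t/N)·s_{ν,k} = sin(πν)·exp(−iπν)·exp(2πi·ν·t/N) and Σ_{k=0}^{N−1} exp(−2πi·k·t/N)·c_{ν,k} = cos(πν)·exp(−iπν)·exp(2πi·ν·t/N). -/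
/-- The vector `c_ν ∈ ℝ^N`, `c_{ν,k} = cos(π_N (k+ν)) D_N(k+ν)` with `π_N = π(1-1/N)`. -/
noncomputable def cVec (N : ℕ) (ν : ℝ) (k : ℕ) : ℝ :=
  Real.cos (Real.pi * (1 - 1 / (N : ℝ)) * ((k : ℝ) + ν)) * dirichlet N ((k : ℝ) + ν)

/-!
Centring the Dirichlet kernel gives `exp(i π_N x) D_N(x) = (1/N) ∑_{m<N} exp(2πi x m/N)`. Hence
`k ↦ c_{ν,k} + i s_{ν,k}` is the inverse discrete Fourier transform of the phase ramp
`m ↦ exp(2πi ν m/N)`, `0 ≤ m < N`, and Fourier inversion gives its transform. The transforms of the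
real part `c_ν` and of the imaginary part `s_ν` are then the combinations of the ramp at `t` and the
conjugate of the ramp at `-t ≡ N - t`, which is `exp(-2πiν)` times the ramp at `t` unless `t = 0`.
-/

open Complex Finset ZMod
open scoped ComplexConjugate Real

lemma cos_mul_exp_neg_mul_I (z : ℂ) :
    cos z * exp (-z * I) = (1 + exp (-(2 * z) * I)) / 2 := by
  rw [Complex.cos, div_mul_eq_mul_div, add_mul, ← Complex.exp_add, ← Complex.exp_add, neg_mul,
    add_neg_cancel, Complex.exp_zero]
  ring_nf

lemma sin_mul_exp_neg_mul_I (z : ℂ) :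
    sin z * exp (-z * I) = (1 - exp (-(2 * z) * I)) / (2 * I) := by
  have two_sin_mul_I : 2 * sin z * I = exp (z * I) - exp (-z * I) := by
    rw [two_sin, mul_assoc, I_mul_I]
    ring
  rw [eq_div_iff (mul_ne_zero two_ne_zero I_ne_zero)]
  calc sin z * exp (-z * I) * (2 * I) = 2 * sin z * I * exp (-z * I) := by ring
    _ = 1 - exp (-(2 * z) * I) := by
      rw [two_sin_mul_I, sub_mul, ← Complex.exp_add, ← Complex.exp_add, neg_mul, add_neg_cancel,
        Complex.exp_zero]
      ring_nf

lemma sum_range_two_mul_add_one_sub_of_odd {R M : Type*} [Ring R] [AddCommGroup M]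
    [IsAddTorsionFree M] {f : R → M} (hf : f.Odd) (N : ℕ) :
    ∑ m ∈ range N, f (2 * (m : R) + 1 - (N : R)) = 0 := by
  have reflect : ∀ m ∈ range N,
      f (2 * ((N - 1 - m : ℕ) : R) + 1 - (N : R)) = -f (2 * (m : R) + 1 - (N : R)) := by
    intro m hm
    have hmN : N = (N - 1 - m) + m + 1 := by have := mem_range.1 hm; omega
    have hcast : (N : R) = ((N - 1 - m : ℕ) : R) + m + 1 := by exact_mod_cast congrArg _ hmN
    rw [← hf, hcast]
    congr 1
    noncomm_ring
  rw [← self_eq_neg, ← sum_neg_distrib, ← sum_congr rfl reflect,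
    sum_range_reflect fun m : ℕ ↦ f (2 * (m : R) + 1 - (N : R))]

lemma sum_zmod_val {M : Type*} [AddCommMonoid M] (N : ℕ) [NeZero N] (f : ℕ → M) :
    ∑ j : ZMod N, f j.val = ∑ k ∈ range N, f k :=
  sum_nbij' ZMod.val Nat.cast (fun j _ ↦ mem_range.2 j.val_lt) (fun _ _ ↦ mem_univ _)
    (fun j _ ↦ natCast_zmod_val j) (fun _ hk ↦ val_natCast_of_lt (mem_range.1 hk)) fun _ _ ↦ rfl

lemma ofReal_dirichlet (N : ℕ) (x : ℝ) :
    (dirichlet N x : ℂ) =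
      (N : ℂ)⁻¹ * ∑ m ∈ range N, exp ((π * x * (2 * (m : ℝ) + 1 - N) / N : ℝ) * I) := by
  have sin_odd : Function.Odd fun y : ℝ ↦ Real.sin (π * x * y / N) := fun y ↦ by
    rw [← Real.sin_neg]
    ring_nf
  simp only [exp_mul_I, sum_add_distrib, ← sum_mul, ← ofReal_cos, ← ofReal_sin, ← ofReal_sum]
  rw [sum_range_two_mul_add_one_sub_of_odd sin_odd, dirichlet]
  simp

lemma exp_mul_dirichlet (N : ℕ) (x : ℝ) :
    exp ((π * (1 - 1 / N) * x : ℝ) * I) * dirichlet N x =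
      (N : ℂ)⁻¹ * ∑ m ∈ range N, exp ((2 * π * x * m / N : ℝ) * I) := by
  rw [ofReal_dirichlet, mul_left_comm, mul_sum]
  congr 1
  refine sum_congr rfl fun m hm ↦ ?_
  have hN : (N : ℝ) ≠ 0 := Nat.cast_ne_zero.2 (Nat.ne_zero_of_lt (mem_range.1 hm))
  rw [← Complex.exp_add, ← add_mul, ← ofReal_add]
  congr 3
  field

section DiscreteFourier

variable {N : ℕ} [NeZero N]

lemma dft_conj (Φ : ZMod N → ℂ) (t : ZMod N) :
    𝓕 (fun j ↦ conj (Φ j)) t = conj (𝓕 Φ (-t)) := by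
  simp only [dft_apply, smul_eq_mul, map_sum, map_mul, ← AddChar.map_neg_eq_conj, mul_neg, neg_neg]

lemma dft_ofReal_re (Φ : ZMod N → ℂ) (t : ZMod N) :
    𝓕 (fun j ↦ ((Φ j).re : ℂ)) t = (𝓕 Φ t + conj (𝓕 Φ (-t))) / 2 := by
  rw [← dft_conj]
  simp only [re_eq_add_conj, dft_apply, smul_eq_mul, mul_div_assoc', mul_add, ← sum_div,
    sum_add_distrib]

lemma dft_ofReal_im (Φ : ZMod N → ℂ) (t : ZMod N) :
    𝓕 (fun j ↦ ((Φ j).im : ℂ)) t = (𝓕 Φ t - conj (𝓕 Φ (-t))) / (2 * I) := by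
  rw [← dft_conj]
  simp only [im_eq_sub_conj, dft_apply, smul_eq_mul, mul_div_assoc', mul_sub, ← sum_div,
    sum_sub_distrib]

lemma dft_comp_val_natCast (f : ℕ → ℂ) (t : ℕ) :
    𝓕 (fun j : ZMod N ↦ f j.val) t =
      ∑ k ∈ range N, exp ((-(2 * π * k * t / N) : ℝ) * I) * f k := by
  rw [dft_apply, ← sum_zmod_val]
  refine sum_congr rfl fun j _ ↦ ?_
  have hj : -(j * (t : ZMod N)) = ((-(j.val * t) : ℤ) : ZMod N) := by simp
  rw [smul_eq_mul, hj, stdAddChar_coe]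
  congr 2
  push_cast
  ring

end DiscreteFourier

/-- The phase ramp `m ↦ exp(2πi ν m / N)`, with `m` the representative in `{0, …, N - 1}`: the
discrete Fourier transform of `c_ν + i s_ν`. -/
noncomputable def phaseRamp (N : ℕ) (ν : ℝ) (m : ZMod N) : ℂ :=
  exp ((2 * π * ν * m.val / N : ℝ) * I)

section PhaseRamp

variable {N : ℕ} (ν : ℝ)

lemma phaseRamp_zero : phaseRamp N ν 0 = 1 := by
  simp [phaseRamp]

lemma phaseRamp_natCast {t : ℕ} (ht : t < N) :
    phaseRamp N ν t = exp ((2 * π * ν * t / N : ℝ) * I) := by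
  rw [phaseRamp, val_natCast_of_lt ht]

variable [NeZero N]

lemma conj_phaseRamp_neg {t : ZMod N} (ht : t ≠ 0) :
    conj (phaseRamp N ν (-t)) = exp (-(2 * (π * ν)) * I) * phaseRamp N ν t := by
  have hN : (N : ℂ) ≠ 0 := NeZero.ne _
  rw [phaseRamp, phaseRamp, neg_val, if_neg ht, Nat.cast_sub t.val_lt.le, ← exp_conj, map_mul,
    conj_ofReal, conj_I, ← Complex.exp_add]
  congr 1
  push_cast
  field

lemma invDFT_phaseRamp (k : ZMod N) :
    𝓕⁻ (phaseRamp N ν) k =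
      exp ((π * (1 - 1 / N) * (k.val + ν) : ℝ) * I) * dirichlet N (k.val + ν) := by
  rw [exp_mul_dirichlet, invDFT_apply, ← sum_zmod_val, smul_eq_mul]
  congr 1
  refine sum_congr rfl fun m _ ↦ ?_
  rw [stdAddChar_apply, ← natCast_zmod_val m, ← natCast_zmod_val k, ← Nat.cast_mul,
    toCircle_natCast, smul_eq_mul, natCast_zmod_val, natCast_zmod_val, phaseRamp,
    ← Complex.exp_add]
  congr 1
  push_cast
  ring

end PhaseRamp

section TransformOfVectors

variable {N : ℕ} [NeZero N] (ν : ℝ)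

lemma cVec_val_eq_re_invDFT (k : ZMod N) : cVec N ν k.val = (𝓕⁻ (phaseRamp N ν) k).re := by
  rw [invDFT_phaseRamp, re_mul_ofReal, exp_ofReal_mul_I_re, cVec]

lemma sVec_val_eq_im_invDFT (k : ZMod N) : sVec N ν k.val = (𝓕⁻ (phaseRamp N ν) k).im := by
  rw [invDFT_phaseRamp, im_mul_ofReal, exp_ofReal_mul_I_im, sVec]

lemma dft_cVec (t : ZMod N) :
    𝓕 (fun k : ZMod N ↦ (cVec N ν k.val : ℂ)) t =
      (phaseRamp N ν t + conj (phaseRamp N ν (-t))) / 2 := by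
  simp only [cVec_val_eq_re_invDFT, dft_ofReal_re, LinearEquiv.apply_symm_apply]

lemma dft_sVec (t : ZMod N) :
    𝓕 (fun k : ZMod N ↦ (sVec N ν k.val : ℂ)) t =
      (phaseRamp N ν t - conj (phaseRamp N ν (-t))) / (2 * I) := by
  simp only [sVec_val_eq_im_invDFT, dft_ofReal_im, LinearEquiv.apply_symm_apply]

lemma dft_cVec_of_ne_zero {t : ZMod N} (ht : t ≠ 0) :
    𝓕 (fun k : ZMod N ↦ (cVec N ν k.val : ℂ)) t =
      Real.cos (π * ν) * exp ((-(π * ν) : ℝ) * I) * phaseRamp N ν t := by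
  rw [dft_cVec, conj_phaseRamp_neg ν ht, ofReal_cos, ofReal_neg, ofReal_mul,
    cos_mul_exp_neg_mul_I]
  ring

lemma dft_sVec_of_ne_zero {t : ZMod N} (ht : t ≠ 0) :
    𝓕 (fun k : ZMod N ↦ (sVec N ν k.val : ℂ)) t =
      Real.sin (π * ν) * exp ((-(π * ν) : ℝ) * I) * phaseRamp N ν t := by
  rw [dft_sVec, conj_phaseRamp_neg ν ht, ofReal_sin, ofReal_neg, ofReal_mul,
    sin_mul_exp_neg_mul_I]
  ring

lemma sum_range_cVec : ∑ k ∈ range N, cVec N ν k = 1 := by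
  have h := dft_cVec (N := N) ν 0
  rw [dft_apply_zero, neg_zero, phaseRamp_zero, map_one, add_self_div_two,
    sum_zmod_val N fun k ↦ (cVec N ν k : ℂ)] at h
  exact_mod_cast h

lemma sum_range_sVec : ∑ k ∈ range N, sVec N ν k = 0 := by
  have h := dft_sVec (N := N) ν 0
  rw [dft_apply_zero, neg_zero, phaseRamp_zero, map_one, sub_self, zero_div,
    sum_zmod_val N fun k ↦ (sVec N ν k : ℂ)] at h
  exact_mod_cast h

end TransformOfVectors

/-- `∑_k s_{ν,k} = 0`, `∑_k c_{ν,k} = 1`, and for `1 ≤ t ≤ N-1`: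
`∑_k exp(−2πi k t/N) s_{ν,k} = sin(πν) exp(−iπν) exp(2πi ν t/N)` and
`∑_k exp(−2πi k t/N) c_{ν,k} = cos(πν) exp(−iπν) exp(2πi ν t/N)`. -/
theorem sVec_cVec_fourier (N : ℕ) (hN : 0 < N) (ν : ℝ) :
    (∑ k ∈ Finset.range N, sVec N ν k = 0) ∧
    (∑ k ∈ Finset.range N, cVec N ν k = 1) ∧
    (∀ t : ℕ, 1 ≤ t → t ≤ N - 1 →
      (∑ k ∈ Finset.range N,
          Complex.exp (((-(2 * Real.pi * (k : ℝ) * (t : ℝ) / (N : ℝ))) : ℝ) * Complex.I) *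
            ((sVec N ν k : ℝ) : ℂ)
        = ((Real.sin (Real.pi * ν) : ℝ) : ℂ) *
            Complex.exp (((-(Real.pi * ν)) : ℝ) * Complex.I) *
            Complex.exp (((2 * Real.pi * ν * (t : ℝ) / (N : ℝ)) : ℝ) * Complex.I)) ∧
      (∑ k ∈ Finset.range N,
          Complex.exp (((-(2 * Real.pi * (k : ℝ) * (t : ℝ) / (N : ℝ))) : ℝ) * Complex.I) *
            ((cVec N ν k : ℝ) : ℂ)
        = ((Real.cos (Real.pi * ν) : ℝ) : ℂ) *
            Complex.exp (((-(Real.pi * ν)) : ℝ) * Complex.I) *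
            Complex.exp (((2 * Real.pi * ν * (t : ℝ) / (N : ℝ)) : ℝ) * Complex.I))) := by
  have : NeZero N := ⟨hN.ne'⟩
  refine ⟨sum_range_sVec ν, sum_range_cVec ν, fun t ht₁ ht₂ ↦ ?_⟩
  have ht : t < N := by omega
  have ht₀ : (t : ZMod N) ≠ 0 := by
    rw [Ne, natCast_eq_zero_iff]
    exact Nat.not_dvd_of_pos_of_lt ht₁ ht
  rw [← phaseRamp_natCast ν ht, ← dft_comp_val_natCast fun k ↦ (sVec N ν k : ℂ),
    ← dft_comp_val_natCast fun k ↦ (cVec N ν k : ℂ)]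
  exact ⟨dft_sVec_of_ne_zero ν ht₀, dft_cVec_of_ne_zero ν ht₀⟩
end

section
/- Let N ≥ 100 be an integer, x ∈ ℝ^N, and ν ∈ ℝ with 0 < |ν| ≤ 1/2, and set x^R := Re(F_ν^{−1}(F x)). Then the total mass of x^R outside the support of x satisfies Σ_{n ∈ {0,…,N−1} : x_n = 0} |x^R_n| ≤ π²·|ν|·(ln N)·‖x‖₁. -/
open Matrix

/-- The shifted Fourier matrix `(F_ν)_{t,k} = exp(−2πi t (k+ν)/N)`; `F = Fmat N 0` is the
discrete Fourier matrix. -/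
noncomputable def Fmat (N : ℕ) (ν : ℝ) : Matrix (Fin N) (Fin N) ℂ :=
  Matrix.of fun t k =>
    Complex.exp (((-(2 * Real.pi * ((t : ℕ) : ℝ) * (((k : ℕ) : ℝ) + ν) / (N : ℝ))) : ℝ)
      * Complex.I)

/-- `F_ν^{-1} (F x)` where `F_ν^{-1} = (1/N) F_ν^*`. -/
noncomputable def gridTransform (N : ℕ) (ν : ℝ) (x : Fin N → ℝ) : Fin N → ℂ :=
  (((N : ℂ))⁻¹ • (Fmat N ν)ᴴ) *ᵥ ((Fmat N 0) *ᵥ fun k => ((x k : ℝ) : ℂ))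

/-!
`F_ν⁻¹ F` is the circulant matrix whose entry at cyclic distance `m` is the normalised Dirichlet
kernel at `m + ν`. On indices where `x` vanishes only off-diagonal entries contribute, so the
off-support mass of the transform is at most `‖x‖₁` times the off-diagonal mass of one column.
At `m + ν` the numerator of the kernel has modulus `|sin (π ν)| ≤ π |ν|`, while the denominator
`N sin (π (m + ν) / N)` is at least of the order of the distance from `m` to `{0, N}`; hence a
column has off-diagonal mass at most `2π |ν| (1 + 1/2 + ⋯ + 1/(N - 1)) ≤ π² |ν| log N`.
-/

section Circulant

variable {G M R : Type*} [AddGroup G] [Fintype G] [DecidableEq G]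

lemma sum_apply_sub_le_sum_compl_zero [AddCommMonoid M] [PartialOrder M] [IsOrderedAddMonoid M]
    {f : G → M} (hf : ∀ m, 0 ≤ f m) {s : Finset G} {k : G} (hk : k ∉ s) :
    ∑ n ∈ s, f (n - k) ≤ ∑ m ∈ {0}ᶜ, f m := by
  have hsub : s.map (Equiv.subRight k).toEmbedding ⊆ {0}ᶜ := by
    intro m hm
    obtain ⟨n, hn, rfl⟩ := Finset.mem_map.mp hm
    simpa [sub_eq_zero] using fun h : n = k => hk (h ▸ hn)
  calc ∑ n ∈ s, f (n - k) = ∑ m ∈ s.map (Equiv.subRight k).toEmbedding, f m := by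
        simp [Finset.sum_map]
    _ ≤ ∑ m ∈ {0}ᶜ, f m := Finset.sum_le_sum_of_subset_of_nonneg hsub fun m _ _ => hf m

lemma sum_norm_circulant_mulVec_le [NonUnitalSeminormedRing R] (v x : G → R) {s : Finset G}
    (hs : ∀ n ∈ s, x n = 0) :
    ∑ n ∈ s, ‖(circulant v *ᵥ x) n‖ ≤ (∑ m ∈ {0}ᶜ, ‖v m‖) * ∑ k, ‖x k‖ := by
  have hcol (k : G) : (∑ n ∈ s, ‖v (n - k)‖) * ‖x k‖ ≤ (∑ m ∈ {0}ᶜ, ‖v m‖) * ‖x k‖ := by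
    by_cases hk : k ∈ s
    · simp [hs k hk]
    · gcongr
      exact sum_apply_sub_le_sum_compl_zero (fun m => norm_nonneg (v m)) hk
  calc ∑ n ∈ s, ‖(circulant v *ᵥ x) n‖ ≤ ∑ n ∈ s, ∑ k, ‖v (n - k)‖ * ‖x k‖ :=
        Finset.sum_le_sum fun n _ => norm_sum_le_of_le _ fun k _ => norm_mul_le _ _
    _ = ∑ k, (∑ n ∈ s, ‖v (n - k)‖) * ‖x k‖ := by
        simp only [Finset.sum_mul]
        exact Finset.sum_comm
    _ ≤ ∑ k, (∑ m ∈ {0}ᶜ, ‖v m‖) * ‖x k‖ := Finset.sum_le_sum fun k _ => hcol k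
    _ = (∑ m ∈ {0}ᶜ, ‖v m‖) * ∑ k, ‖x k‖ := (Finset.mul_sum ..).symm

end Circulant

section RealBounds

open Real

lemma inv_sin_le_of_le_pi_div_two {x : ℝ} (hx : 0 < x) (hx' : x ≤ π / 2) :
    (sin x)⁻¹ ≤ π / 2 * x⁻¹ := by
  calc (sin x)⁻¹ ≤ (2 / π * x)⁻¹ := inv_anti₀ (by positivity) (mul_le_sin hx.le hx')
    _ = π / 2 * x⁻¹ := by rw [mul_inv, inv_div]

lemma inv_sin_le {x : ℝ} (hx : 0 < x) (hx' : x < π) :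
    (sin x)⁻¹ ≤ π / 2 * (x⁻¹ + (π - x)⁻¹) := by
  have hy : 0 < π - x := sub_pos.mpr hx'
  have hπ : 0 ≤ π / 2 := by positivity
  rcases le_total x (π / 2) with h | h
  · refine (inv_sin_le_of_le_pi_div_two hx h).trans (mul_le_mul_of_nonneg_left ?_ hπ)
    exact le_add_of_nonneg_right (by positivity)
  · rw [← sin_pi_sub]
    refine (inv_sin_le_of_le_pi_div_two hy (by linarith)).trans (mul_le_mul_of_nonneg_left ?_ hπ)
    exact le_add_of_nonneg_left (by positivity)

lemma inv_sin_pi_mul_div_le {u a : ℝ} (hu : 0 < u) (hua : u < a) :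
    (sin (π * u / a))⁻¹ ≤ a / 2 * (u⁻¹ + (a - u)⁻¹) := by
  have ha : 0 < a := hu.trans hua
  have hlt : π * u / a < π := by
    rw [div_lt_iff₀ ha]
    gcongr
  have hsub : π - π * u / a = π * (a - u) / a := by field_simp
  calc (sin (π * u / a))⁻¹ ≤ π / 2 * ((π * u / a)⁻¹ + (π - π * u / a)⁻¹) :=
        inv_sin_le (by positivity) hlt
    _ = a / 2 * (u⁻¹ + (a - u)⁻¹) := by
        rw [hsub]
        field_simp

lemma abs_sin_pi_mul_natCast_add_le (m : ℕ) (ν : ℝ) : |sin (π * (m + ν))| ≤ π * |ν| := by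
  calc |sin (π * (m + ν))| = |sin (π * ν)| := by
        rw [show π * (m + ν) = π * ν + m * π by ring, sin_add_nat_mul_pi, abs_mul, abs_pow]
        simp
    _ ≤ |π * ν| := abs_sin_le_abs
    _ = π * |ν| := by rw [abs_mul, abs_of_pos pi_pos]

lemma harmonic_le_pi_div_two_mul_log (n : ℕ) : (harmonic n : ℝ) ≤ π / 2 * log (n + 1) := by
  induction n with
  | zero => simp
  | succ n ih =>
    have hn : (0 : ℝ) < n + 1 := by positivity
    have hstep : ((n : ℝ) + 1)⁻¹ ≤ π / 2 * log (1 + ((n : ℝ) + 1)⁻¹) := by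
      calc ((n : ℝ) + 1)⁻¹ ≤ 3 / 2 * (2 * ((n : ℝ) + 1)⁻¹ / (((n : ℝ) + 1)⁻¹ + 2)) := by
            field_simp
            linarith
        _ ≤ π / 2 * log (1 + ((n : ℝ) + 1)⁻¹) := by
            gcongr
            · exact pi_gt_three.le
            · exact le_log_one_add_of_nonneg (by positivity)
    have hlog : log ((n : ℝ) + 1 + 1) = log (n + 1) + log (1 + ((n : ℝ) + 1)⁻¹) := by
      rw [← log_mul hn.ne' (by positivity)]
      congr 1
      field_simp
    rw [harmonic_succ]
    push_cast
    rw [hlog, mul_add]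
    exact add_le_add ih hstep

lemma sum_inv_succ_add_inv_sub (n : ℕ) :
    ∑ i : Fin n, (((i : ℝ) + 1)⁻¹ + ((n : ℝ) - i)⁻¹) = 2 * harmonic n := by
  have hharm : ∑ i : Fin n, ((i : ℝ) + 1)⁻¹ = harmonic n := by
    rw [Fin.sum_univ_eq_sum_range fun i => ((i : ℝ) + 1)⁻¹]
    simp [harmonic]
  have hrev : ∑ i : Fin n, ((n : ℝ) - i)⁻¹ = ∑ i : Fin n, ((i : ℝ) + 1)⁻¹ := by
    rw [← Equiv.sum_comp Fin.revPerm]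
    refine Finset.sum_congr rfl fun i _ => ?_
    rw [Fin.revPerm_apply, Fin.val_rev, Nat.cast_sub i.isLt]
    push_cast
    ring
  rw [Finset.sum_add_distrib, hrev, hharm, two_mul]

end RealBounds

section DirichletKernel

open Real

/-- The Dirichlet kernel `N⁻¹ ∑_{t < N} exp (2πi t u / N)`, normalised to take the value `1` at
`0`; its values at `n - k + ν` are the entries of `F_ν⁻¹ F`. It is written as a geometric sum. -/
noncomputable def dirichletKernel (N : ℕ) (u : ℝ) : ℂ :=
  (N : ℂ)⁻¹ * ∑ t ∈ Finset.range N, Complex.exp (Complex.I * (2 * π * u / N : ℝ)) ^ t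

variable {N : ℕ}

lemma dirichletKernel_add_self [NeZero N] (u : ℝ) :
    dirichletKernel N (u + N) = dirichletKernel N u := by
  have hN : (N : ℂ) ≠ 0 := NeZero.ne _
  have harg : Complex.I * (2 * π * (u + N) / N : ℝ) =
      Complex.I * (2 * π * u / N : ℝ) + 2 * π * Complex.I := by
    push_cast
    field_simp
  rw [dirichletKernel, harg, Complex.exp_periodic, dirichletKernel]

lemma dirichletKernel_val_sub_add [NeZero N] (n k : Fin N) (ν : ℝ) :
    dirichletKernel N ((n - k : Fin N) + ν) = dirichletKernel N (n - k + ν) := by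
  have hcast : (((n - k : Fin N) : ℕ) : ℝ) = if k ≤ n then (n - k : ℝ) else (n - k : ℝ) + N := by
    exact_mod_cast congrArg (Int.cast : ℤ → ℝ) (Fin.coe_int_sub_eq_ite n k)
  rw [hcast]
  split_ifs
  · rfl
  · rw [add_right_comm, dirichletKernel_add_self]

lemma norm_dirichletKernel_mul [NeZero N] (u : ℝ) :
    ‖dirichletKernel N u‖ * (N * |sin (π * u / N)|) = |sin (π * u)| := by
  have hN : (N : ℝ) ≠ 0 := NeZero.ne _
  have hNC : (N : ℂ) ≠ 0 := NeZero.ne _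
  set z := Complex.exp (Complex.I * (2 * π * u / N : ℝ)) with hz
  have hpow : z ^ N = Complex.exp (Complex.I * (2 * π * u : ℝ)) := by
    rw [hz, ← Complex.exp_nat_mul]
    congr 1
    push_cast
    field_simp
  have hnorm : ‖z - 1‖ = 2 * |sin (π * u / N)| := by
    rw [hz, Complex.norm_exp_I_mul_ofReal_sub_one, norm_mul, norm_two, norm_eq_abs]
    ring_nf
  have hnorm_pow : ‖z ^ N - 1‖ = 2 * |sin (π * u)| := by
    rw [hpow, Complex.norm_exp_I_mul_ofReal_sub_one, norm_mul, norm_two, norm_eq_abs]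
    ring_nf
  have hgeom := congrArg norm (geom_sum_mul z N)
  rw [norm_mul, hnorm, hnorm_pow] at hgeom
  rw [dirichletKernel, ← hz, norm_mul, norm_inv, Complex.norm_natCast]
  field_simp
  linarith

lemma norm_dirichletKernel_le {u : ℝ} (hu : 0 < u) (huN : u < N) :
    ‖dirichletKernel N u‖ ≤ |sin (π * u)| * ((u⁻¹ + (N - u)⁻¹) / 2) := by
  have hN : (0 : ℝ) < N := hu.trans huN
  have : NeZero N := ⟨by exact_mod_cast hN.ne'⟩
  have hlt : π * u / N < π := by
    rw [div_lt_iff₀ hN]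
    gcongr
  have hsin : 0 < sin (π * u / N) := sin_pos_of_pos_of_lt_pi (by positivity) hlt
  calc ‖dirichletKernel N u‖ = |sin (π * u)| * ((sin (π * u / N))⁻¹ / N) := by
        rw [← norm_dirichletKernel_mul (N := N), abs_of_pos hsin]
        field_simp
    _ ≤ |sin (π * u)| * (N / 2 * (u⁻¹ + (N - u)⁻¹) / N) := by
        gcongr
        exact inv_sin_pi_mul_div_le hu huN
    _ = |sin (π * u)| * ((u⁻¹ + (N - u)⁻¹) / 2) := by
        field_simp

lemma norm_dirichletKernel_natCast_add_le {m : ℕ} {ν : ℝ} (hm : 0 < m) (hmN : m < N)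
    (hν : |ν| ≤ 1 / 2) :
    ‖dirichletKernel N (m + ν)‖ ≤ π * |ν| * ((m : ℝ)⁻¹ + ((N : ℝ) - m)⁻¹) := by
  obtain ⟨hν₁, hν₂⟩ := abs_le.mp hν
  have hm₁ : (1 : ℝ) ≤ m := by exact_mod_cast hm
  have hm₂ : (m : ℝ) + 1 ≤ N := by exact_mod_cast hmN
  have hleft : (m : ℝ) / 2 ≤ m + ν := by linarith
  have hright : ((N : ℝ) - m) / 2 ≤ N - (m + ν) := by linarith
  calc ‖dirichletKernel N (m + ν)‖
      ≤ |sin (π * (m + ν))| * (((m + ν)⁻¹ + (N - (m + ν))⁻¹) / 2) :=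
        norm_dirichletKernel_le (by linarith) (by linarith)
    _ ≤ π * |ν| * (((m / 2 : ℝ)⁻¹ + ((N - m) / 2 : ℝ)⁻¹) / 2) := by
        gcongr
        · have : 0 < N - (m + ν) := by linarith
          have : 0 < m + ν := by linarith
          positivity
        · exact abs_sin_pi_mul_natCast_add_le m ν
        · linarith
    _ = π * |ν| * ((m : ℝ)⁻¹ + ((N : ℝ) - m)⁻¹) := by
        rw [inv_div, inv_div]
        ring

lemma sum_norm_dirichletKernel_le [NeZero N] {ν : ℝ} (hν : |ν| ≤ 1 / 2) :
    ∑ m ∈ ({0}ᶜ : Finset (Fin N)), ‖dirichletKernel N (m + ν)‖ ≤ π ^ 2 * |ν| * log N := by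
  obtain ⟨n, rfl⟩ := Nat.exists_eq_succ_of_ne_zero (NeZero.ne N)
  rw [← Fin.image_succ_univ, Finset.sum_image (Fin.succ_injective n).injOn]
  calc ∑ i : Fin n, ‖dirichletKernel (n + 1) (i.succ + ν)‖
      ≤ ∑ i : Fin n, π * |ν| * (((i : ℝ) + 1)⁻¹ + ((n : ℝ) - i)⁻¹) := by
        refine Finset.sum_le_sum fun i _ => ?_
        simpa using norm_dirichletKernel_natCast_add_le i.succ_pos i.succ.isLt hν
    _ = π * |ν| * (2 * harmonic n) := by rw [← Finset.mul_sum, sum_inv_succ_add_inv_sub]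
    _ ≤ π * |ν| * (2 * (π / 2 * log (n + 1))) := by
        gcongr
        exact harmonic_le_pi_div_two_mul_log n
    _ = π ^ 2 * |ν| * log (n + 1 : ℕ) := by
        push_cast
        ring

end DirichletKernel

section GridTransform

variable {N : ℕ} [NeZero N] (ν : ℝ) (x : Fin N → ℝ)

lemma smul_conjTranspose_Fmat_mul_Fmat_zero :
    ((N : ℂ)⁻¹ • (Fmat N ν)ᴴ) * Fmat N 0 =
      circulant fun m : Fin N => dirichletKernel N (m + ν) := by
  ext n k
  rw [circulant_apply, dirichletKernel_val_sub_add, dirichletKernel, Finset.sum_range,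
    Finset.mul_sum, Matrix.mul_apply]
  refine Finset.sum_congr rfl fun t _ => ?_
  rw [Matrix.smul_apply, smul_eq_mul, mul_assoc, conjTranspose_apply, Fmat, Fmat, Matrix.of_apply,
    Matrix.of_apply, Complex.star_def, ← Complex.exp_conj, ← Complex.exp_add,
    ← Complex.exp_nat_mul]
  simp only [map_mul, Complex.conj_ofReal, Complex.conj_I]
  congr 2
  push_cast
  ring

lemma gridTransform_eq_circulant_mulVec :
    gridTransform N ν x =
      circulant (fun m : Fin N => dirichletKernel N (m + ν)) *ᵥ fun k => (x k : ℂ) := by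
  rw [gridTransform, mulVec_mulVec, smul_conjTranspose_Fmat_mul_Fmat_zero]

end GridTransform

theorem gridTransform_offsupport_mass_general {N : ℕ} [NeZero N] (x : Fin N → ℝ) {ν : ℝ}
    (hν : |ν| ≤ 1 / 2) :
    ∑ n with x n = 0, ‖gridTransform N ν x n‖
      ≤ Real.pi ^ 2 * |ν| * Real.log N * ∑ k, |x k| := by
  rw [gridTransform_eq_circulant_mulVec]
  calc _ ≤ (∑ m ∈ ({0}ᶜ : Finset (Fin N)), ‖dirichletKernel N (m + ν)‖) * ∑ k, ‖(x k : ℂ)‖ :=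
        sum_norm_circulant_mulVec_le _ _ (by simp)
    _ ≤ Real.pi ^ 2 * |ν| * Real.log N * ∑ k, |x k| := by
        simp only [Complex.norm_real, Real.norm_eq_abs]
        gcongr
        exact sum_norm_dirichletKernel_le hν

/-- For `N ≥ 100`, `0 < |ν| ≤ 1/2`, and `x^R = Re(F_ν^{-1}(F x))`, the mass of `x^R` outside
the support of `x` satisfies `∑_{n : x_n = 0} |x^R_n| ≤ π²|ν| (ln N) ‖x‖₁`. -/
theorem gridTransform_offsupport_mass (N : ℕ) (hN : 100 ≤ N) (x : Fin N → ℝ) (ν : ℝ)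
    (hν0 : 0 < |ν|) (hν : |ν| ≤ 1 / 2) :
    ∑ n ∈ Finset.univ.filter (fun n : Fin N => x n = 0), |(gridTransform N ν x n).re|
      ≤ Real.pi ^ 2 * |ν| * Real.log N * ∑ k, |x k| := by
  have : NeZero N := ⟨by lia⟩
  exact (Finset.sum_le_sum fun n _ => Complex.abs_re_le_norm _).trans
    (gridTransform_offsupport_mass_general x hν)
end

section
/- Let N be a positive integer, ν ∈ ℝ, and let x ∈ ℝ^N have nonnegative entries. Set x^I := Im(F_ν^{−1}(F x)). Then ‖x^I‖₂² = sin²(πν)·(‖x‖₂² − ‖x‖₁²/N). -/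
open Matrix

/-!
The operator `G = F_ν⁻¹ F` is an isometry and fixes constant vectors, so replacing `x` by
`x - c`, where `c` is its mean, does not change `Im (G x)`, while
`‖G (x - c)‖₂² = ‖x - c‖₂² = ‖x‖₂² - (∑ x)² / N`.

If `x` is real with `∑ x = 0`, its spectrum is conjugate symmetric and vanishes at frequency `0`.
Reversing the frequencies in `F_ν⁻¹` then gives `conj (G x) = exp (-2πiν) G x`: all entries of
`G x` lie on the real line of direction `exp (πiν)`, so the imaginary parts carry the proportion
`sin² (πν)` of the energy. The zero frequency has to be removed because it is its own reversal and
does not pick up the factor `exp (-2πiν)`.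
-/

section General

theorem sum_sub_mean_sq {ι K : Type*} [Fintype ι] [Field K] (hι : (Fintype.card ι : K) ≠ 0)
    (x : ι → K) :
    ∑ i, (x i - (∑ j, x j) / Fintype.card ι) ^ 2 =
      ∑ i, x i ^ 2 - (∑ i, x i) ^ 2 / Fintype.card ι := by
  simp only [sub_sq, Finset.sum_add_distrib, Finset.sum_sub_distrib, ← Finset.sum_mul,
    ← Finset.mul_sum, Finset.sum_const, Finset.card_univ, nsmul_eq_mul]
  field_simp
  ring

theorem im_sq_eq_sin_sq_mul_norm_sq {φ : ℝ} {w : ℂ}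
    (hw : star w = Complex.exp (Complex.I * φ) * w) :
    w.im ^ 2 = Real.sin (φ / 2) ^ 2 * ‖w‖ ^ 2 := by
  have hsub : w - star w = -((Complex.exp (Complex.I * φ) - 1) * w) := by
    rw [hw]
    ring
  have hnorm : 2 * |w.im| = 2 * |Real.sin (φ / 2)| * ‖w‖ := by
    simpa [Complex.sub_conj, Complex.norm_exp_I_mul_ofReal_sub_one] using congrArg norm hsub
  have habs : |w.im| = |Real.sin (φ / 2)| * ‖w‖ := by linarith
  rw [← sq_abs, habs, mul_pow, sq_abs]

theorem star_dotProduct_self_eq_sum_norm_sq {ι 𝕜 : Type*} [Fintype ι] [RCLike 𝕜] (u : ι → 𝕜) :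
    star u ⬝ᵥ u = ((∑ i, ‖u i‖ ^ 2 : ℝ) : 𝕜) := by
  simp [dotProduct, RCLike.conj_mul]

theorem sum_norm_sq_mulVec {m n 𝕜 : Type*} [Fintype m] [Fintype n] [DecidableEq n] [RCLike 𝕜]
    {A : Matrix m n 𝕜} {r : ℝ} (hA : Aᴴ * A = (r : 𝕜) • 1) (v : n → 𝕜) :
    ∑ i, ‖(A *ᵥ v) i‖ ^ 2 = r * ∑ j, ‖v j‖ ^ 2 := by
  apply RCLike.ofReal_injective (K := 𝕜)
  rw [RCLike.ofReal_mul, ← star_dotProduct_self_eq_sum_norm_sq,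
    ← star_dotProduct_self_eq_sum_norm_sq, star_mulVec, ← dotProduct_mulVec, mulVec_mulVec, hA,
    smul_mulVec, one_mulVec, dotProduct_smul, smul_eq_mul]

theorem geom_sum_zpow_eq_zero {K : Type*} [Field K] {ζ : K} {n : ℕ} (hζ : IsPrimitiveRoot ζ n)
    {a : ℤ} (ha : ¬ (n : ℤ) ∣ a) : ∑ i ∈ Finset.range n, (ζ ^ a) ^ i = 0 := by
  have hne : ζ ^ a ≠ 1 := mt (hζ.zpow_eq_one_iff_dvd a).mp ha
  have hpow : (ζ ^ a) ^ n = 1 := by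
    rw [← zpow_natCast, zpow_comm, zpow_natCast, hζ.pow_eq_one, _root_.one_zpow]
  rw [geom_sum_eq hne, hpow, sub_self, zero_div]

theorem natCast_dvd_fin_sub_iff {n : ℕ} (k l : Fin n) : (n : ℤ) ∣ (k : ℤ) - l ↔ k = l := by
  rw [← Nat.modEq_iff_dvd]
  exact ⟨fun h ↦ Fin.ext (h.eq_of_lt_of_lt l.2 k.2).symm, fun h ↦ h ▸ rfl⟩

end General

section ShiftedFourier

theorem star_Fmat_mul_Fmat (N : ℕ) (ν : ℝ) (t k l : Fin N) :
    star (Fmat N ν t k) * Fmat N ν t l =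
      (Complex.exp (2 * Real.pi * Complex.I / N) ^ ((k : ℤ) - l)) ^ (t : ℕ) := by
  simp only [Fmat, of_apply, Complex.star_def, ← Complex.exp_conj, map_mul, Complex.conj_ofReal,
    Complex.conj_I, ← Complex.exp_add, ← Complex.exp_int_mul, ← Complex.exp_nat_mul]
  congr 1
  push_cast
  ring

variable (N : ℕ) [NeZero N] (ν : ℝ)

theorem conjTranspose_Fmat_mul_Fmat : (Fmat N ν)ᴴ * Fmat N ν = (N : ℂ) • 1 := by
  ext k l
  simp only [mul_apply, conjTranspose_apply, star_Fmat_mul_Fmat, Matrix.smul_apply, one_apply]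
  rw [Fin.sum_univ_eq_sum_range (fun t ↦ (_ ^ ((k : ℤ) - l)) ^ t)]
  split_ifs with hkl
  · simp [hkl]
  · rw [smul_zero]
    exact geom_sum_zpow_eq_zero (Complex.isPrimitiveRoot_exp N (NeZero.ne N))
      (mt (natCast_dvd_fin_sub_iff k l).mp hkl)

theorem Fmat_mul_conjTranspose_Fmat : Fmat N ν * (Fmat N ν)ᴴ = (N : ℂ) • 1 := by
  have hN : (N : ℂ) ≠ 0 := NeZero.ne _
  have hinv : ((N : ℂ)⁻¹ • (Fmat N ν)ᴴ) * Fmat N ν = 1 := by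
    rw [smul_mul, conjTranspose_Fmat_mul_Fmat, inv_smul_smul₀ hN]
  rwa [mul_eq_one_comm, Matrix.mul_smul, inv_smul_eq_iff₀ hN] at hinv

theorem Fmat_zero_left (k : Fin N) : Fmat N ν 0 k = 1 := by
  simp [Fmat]

theorem Fmat_neg {t : Fin N} (ht : t ≠ 0) (k : Fin N) :
    Fmat N ν (-t) k =
      Complex.exp (Complex.I * (-(2 * Real.pi * ν) : ℝ)) * star (Fmat N ν t k) := by
  have hN : (N : ℂ) ≠ 0 := NeZero.ne _
  have hneg : (((-t : Fin N) : ℕ) : ℂ) = N - (t : ℕ) := by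
    rw [Fin.val_neg, if_neg ht, Nat.cast_sub t.2.le]
  simp only [Fmat, of_apply, Complex.star_def, ← Complex.exp_conj, map_mul, Complex.conj_ofReal,
    Complex.conj_I, ← Complex.exp_add]
  refine Complex.exp_eq_exp_iff_exists_int.mpr ⟨-(k : ℕ), ?_⟩
  push_cast
  rw [hneg]
  field_simp
  ring

theorem Fmat_zero_shift_neg (t k : Fin N) : Fmat N 0 (-t) k = star (Fmat N 0 t k) := by
  rcases eq_or_ne t 0 with rfl | ht
  · simp [Fmat_zero_left]
  · simp [Fmat_neg N 0 ht]

theorem star_Fmat_mulVec_ofReal (x : Fin N → ℝ) (t : Fin N) :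
    star ((Fmat N 0 *ᵥ fun k ↦ (x k : ℂ)) t) = (Fmat N 0 *ᵥ fun k ↦ (x k : ℂ)) (-t) := by
  simp [mulVec, dotProduct, Fmat_zero_shift_neg]

theorem star_conjTranspose_Fmat_mulVec {z : Fin N → ℂ} (hz_zero : z 0 = 0)
    (hz_star : ∀ t, star (z t) = z (-t)) (n : Fin N) :
    star (((Fmat N ν)ᴴ *ᵥ z) n) =
      Complex.exp (Complex.I * (-(2 * Real.pi * ν) : ℝ)) * ((Fmat N ν)ᴴ *ᵥ z) n := by
  simp only [mulVec, dotProduct, conjTranspose_apply, star_sum, star_mul', star_star,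
    Finset.mul_sum]
  rw [← Equiv.sum_comp (Equiv.neg (Fin N))]
  refine Finset.sum_congr rfl fun t _ ↦ ?_
  rcases eq_or_ne t 0 with rfl | ht
  · simp [hz_zero]
  · rw [Equiv.neg_apply, Fmat_neg N ν ht, hz_star, neg_neg, mul_assoc]

theorem conjTranspose_Fmat_mulVec_single_zero :
    (Fmat N ν)ᴴ *ᵥ Pi.single 0 1 = 1 := by
  ext n
  simp [Fmat_zero_left]

theorem Fmat_mulVec_one : Fmat N 0 *ᵥ 1 = (N : ℂ) • Pi.single 0 1 := by
  rw [← conjTranspose_Fmat_mulVec_single_zero N 0, mulVec_mulVec, Fmat_mul_conjTranspose_Fmat,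
    smul_mulVec, one_mulVec]

theorem sum_norm_sq_Fmat_mulVec (z : Fin N → ℂ) :
    ∑ t, ‖(Fmat N ν *ᵥ z) t‖ ^ 2 = N * ∑ k, ‖z k‖ ^ 2 :=
  sum_norm_sq_mulVec (by simpa using conjTranspose_Fmat_mul_Fmat N ν) z

theorem sum_norm_sq_conjTranspose_Fmat_mulVec (z : Fin N → ℂ) :
    ∑ k, ‖((Fmat N ν)ᴴ *ᵥ z) k‖ ^ 2 = N * ∑ t, ‖z t‖ ^ 2 :=
  sum_norm_sq_mulVec (by simpa using Fmat_mul_conjTranspose_Fmat N ν) z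

end ShiftedFourier

section GridTransform

theorem gridTransform_sub (N : ℕ) (ν : ℝ) (x y : Fin N → ℝ) :
    gridTransform N ν (x - y) = gridTransform N ν x - gridTransform N ν y := by
  have hcast : (fun k ↦ ((x - y) k : ℂ)) = (fun k ↦ (x k : ℂ)) - fun k ↦ (y k : ℂ) := by
    ext k
    simp
  rw [gridTransform, hcast, mulVec_sub, mulVec_sub, gridTransform, gridTransform]

variable (N : ℕ) [NeZero N] (ν : ℝ)

theorem gridTransform_const (c : ℝ) :
    gridTransform N ν (Function.const _ c) = Function.const _ (c : ℂ) := by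
  have hconst (a : ℂ) : Function.const (Fin N) a = a • 1 := by
    ext k
    simp
  change ((N : ℂ)⁻¹ • (Fmat N ν)ᴴ) *ᵥ (Fmat N 0 *ᵥ Function.const _ (c : ℂ)) = _
  rw [hconst, mulVec_smul, Fmat_mulVec_one, smul_mulVec, mulVec_smul, mulVec_smul,
    conjTranspose_Fmat_mulVec_single_zero, smul_comm, inv_smul_smul₀ (NeZero.ne (N : ℂ))]

theorem sum_norm_sq_gridTransform (x : Fin N → ℝ) :
    ∑ n, ‖gridTransform N ν x n‖ ^ 2 = ∑ n, x n ^ 2 := by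
  have hN : (N : ℝ) ≠ 0 := NeZero.ne _
  simp only [gridTransform, smul_mulVec, Pi.smul_apply, norm_smul, mul_pow, ← Finset.mul_sum,
    sum_norm_sq_conjTranspose_Fmat_mulVec, sum_norm_sq_Fmat_mulVec, norm_inv, Complex.norm_natCast,
    Complex.norm_real, Real.norm_eq_abs, sq_abs]
  field_simp

theorem star_gridTransform_of_sum_eq_zero {x : Fin N → ℝ} (hx : ∑ k, x k = 0) (n : Fin N) :
    star (gridTransform N ν x n) =
      Complex.exp (Complex.I * (-(2 * Real.pi * ν) : ℝ)) * gridTransform N ν x n := by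
  have hzero : (Fmat N 0 *ᵥ fun k ↦ (x k : ℂ)) 0 = 0 := by
    simp [mulVec, dotProduct, Fmat_zero_left, ← Complex.ofReal_sum, hx]
  rw [gridTransform, smul_mulVec, Pi.smul_apply, star_smul, star_inv₀, star_natCast,
    star_conjTranspose_Fmat_mulVec N ν hzero (star_Fmat_mulVec_ofReal N x), mul_smul_comm]

theorem gridTransform_im_sq_of_sum_eq_zero {x : Fin N → ℝ} (hx : ∑ k, x k = 0) (n : Fin N) :
    (gridTransform N ν x n).im ^ 2 =
      Real.sin (Real.pi * ν) ^ 2 * ‖gridTransform N ν x n‖ ^ 2 := by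
  have hhalf : -(2 * Real.pi * ν) / 2 = -(Real.pi * ν) := by ring
  rw [im_sq_eq_sin_sq_mul_norm_sq (star_gridTransform_of_sum_eq_zero N ν hx n), hhalf,
    Real.sin_neg, neg_sq]

end GridTransform

theorem gridTransform_im_norm_sq_general (N : ℕ) [NeZero N] (ν : ℝ) (x : Fin N → ℝ) :
    ∑ n, (gridTransform N ν x n).im ^ 2 =
      Real.sin (Real.pi * ν) ^ 2 * (∑ n, x n ^ 2 - (∑ n, x n) ^ 2 / N) := by
  have hN : (N : ℝ) ≠ 0 := NeZero.ne _
  set c : ℝ := (∑ n, x n) / N with hc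
  set y : Fin N → ℝ := x - Function.const _ c with hy
  have hsum : ∑ n, y n = 0 := by
    simp [hy, hc, mul_div_cancel₀ _ hN]
  have him (n : Fin N) : (gridTransform N ν x n).im = (gridTransform N ν y n).im := by
    simp [hy, gridTransform_sub, gridTransform_const]
  calc ∑ n, (gridTransform N ν x n).im ^ 2
      = Real.sin (Real.pi * ν) ^ 2 * ∑ n, ‖gridTransform N ν y n‖ ^ 2 := by
        simp only [him, gridTransform_im_sq_of_sum_eq_zero N ν hsum, Finset.mul_sum]
    _ = Real.sin (Real.pi * ν) ^ 2 * ∑ n, y n ^ 2 := by rw [sum_norm_sq_gridTransform]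
    _ = Real.sin (Real.pi * ν) ^ 2 * (∑ n, x n ^ 2 - (∑ n, x n) ^ 2 / N) := by
        congr 1
        simpa [hy, hc] using sum_sub_mean_sq (by simpa using hN) x

/-- For nonnegative `x ∈ ℝ^N` and `x^I = Im(F_ν^{-1}(F x))`,
`‖x^I‖₂² = sin²(πν)(‖x‖₂² − ‖x‖₁²/N)`. -/
theorem gridTransform_im_norm_sq (N : ℕ) (hN : 0 < N) (ν : ℝ) (x : Fin N → ℝ)
    (hx : ∀ n, 0 ≤ x n) :
    ∑ n, ((gridTransform N ν x n).im)^2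
      = (Real.sin (Real.pi * ν))^2 * (∑ n, (x n)^2 - (∑ n, |x n|)^2 / (N : ℝ)) := by
  have : NeZero N := ⟨hN.ne'⟩
  simpa only [abs_of_nonneg (hx _)] using gridTransform_im_norm_sq_general N ν x
end

section
/- Let N be a positive integer and let 𝓕 be a finite set of frequencies, where each f ∈ 𝓕 is written f = (n_f + ν_f)/N with n_f ∈ {0,…,N−1} and ν_f ∈ (−1/2, 1/2], with real amplitudes p_f. Let y ∈ ℂ^N be the time-domain signal y_t = Σ_{f∈𝓕} p_f·exp(−2πi·f·t) for t = 0,…,N−1, and let y_on := F·Re(F^{−1}y) and y_off := i·F·Im(F^{−1}y) be its on-grid and off-grid components. Then (y_off)_0 = 0 and (y_on)_0 = Σ_{f∈𝓕} p_f, and for every t ∈ {1,…,N−1}: (y_off)_t = −i·Σ_{f∈𝓕} p_f·sin(πν_f)·exp(iπν_f)·exp(−2πi·f·t) and (y_on)_t = Σ_{f∈𝓕} p_f·cos(πν_f)·exp(iπν_f)·exp(−2πi·f·t). -/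
open Matrix

/-- `F^{-1} y = (1/N) F^* y`. -/
noncomputable def invF (N : ℕ) (y : Fin N → ℂ) : Fin N → ℂ :=
  (((N : ℂ))⁻¹ • (Fmat N 0)ᴴ) *ᵥ y

/-- The on-grid component `y_on = F · Re(F^{-1} y)`. -/
noncomputable def onGrid (N : ℕ) (y : Fin N → ℂ) : Fin N → ℂ :=
  Fmat N 0 *ᵥ fun n => (((invF N y n).re : ℝ) : ℂ)

/-- The off-grid component `y_off = i · F · Im(F^{-1} y)`. -/
noncomputable def offGrid (N : ℕ) (y : Fin N → ℂ) : Fin N → ℂ :=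
  fun t => Complex.I * ((Fmat N 0 *ᵥ fun n => (((invF N y n).im : ℝ) : ℂ)) t)

/-!
Conjugating `v` conjugates its discrete Fourier transform and reverses the index `t ↦ -t`, since
the entries of the Fourier matrix are characters. Hence `y_on` and `y_off` are the two halves
`(y_t ± conj y_{-t}) / 2` of `y`. For a pure tone `e_t = exp(-2πi f t)` with `N f ≡ ν` modulo `1`,
reading `-t` as the sample `N - t` gives `conj e_{N-t} = e^{2πiν} e_t`, so the two halves multiply
the tone by `(1 ± e^{2πiν}) / 2`, that is, by `cos (πν) e^{iπν}` and `-i sin (πν) e^{iπν}`.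
At `t = 0` the reversed sample is `y_0` itself, which is real.
-/

open scoped ComplexConjugate

lemma sum_fin_pow_mul_inv_pow {K : Type*} [Field K] {N : ℕ} {ω : K} (hω : IsPrimitiveRoot ω N)
    (t s : Fin N) :
    ∑ k : Fin N, ω ^ ((t : ℕ) * k) * ω⁻¹ ^ ((s : ℕ) * k) = if t = s then (N : K) else 0 := by
  set q : K := ω ^ (t : ℕ) * ω⁻¹ ^ (s : ℕ) with hq
  have hω0 : ω ≠ 0 := hω.ne_zero (Nat.ne_zero_of_lt t.isLt)
  have hgeom : ∑ k : Fin N, ω ^ ((t : ℕ) * k) * ω⁻¹ ^ ((s : ℕ) * k) =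
      ∑ k ∈ Finset.range N, q ^ k := by
    simp only [← Fin.sum_univ_eq_sum_range, hq, mul_pow, pow_mul]
  rw [hgeom]
  split_ifs with hts
  · have hq1 : q = 1 := by rw [hq, hts, ← mul_pow, mul_inv_cancel₀ hω0, one_pow]
    simp [hq1]
  · have hqN : q ^ N = 1 := by
      rw [hq, mul_pow, pow_right_comm, pow_right_comm ω⁻¹, inv_pow ω N, hω.pow_eq_one]
      simp
    have hq1 : q ≠ 1 := fun h ↦ hts <| Fin.ext <| hω.pow_inj t.isLt s.isLt <| by
      rwa [hq, inv_pow, mul_inv_eq_one₀ (pow_ne_zero _ hω0)] at h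
    rw [geom_sum_eq hq1, hqN, sub_self, zero_div]

section Fourier

variable {N : ℕ}

/-- The primitive root of unity `ω = e^{-2πi/N}` for which the discrete Fourier matrix has entries
`ω ^ (t k)`. -/
noncomputable def dftRoot (N : ℕ) : ℂ := (Complex.exp (2 * Real.pi * Complex.I / N))⁻¹

lemma isPrimitiveRoot_dftRoot (hN : N ≠ 0) : IsPrimitiveRoot (dftRoot N) N :=
  (Complex.isPrimitiveRoot_exp N hN).inv

lemma conj_dftRoot (N : ℕ) : conj (dftRoot N) = (dftRoot N)⁻¹ := by
  rw [dftRoot, map_inv₀, ← Complex.exp_conj, ← Complex.exp_neg]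
  simp [neg_div, Complex.conj_ofNat]

lemma Fmat_zero_apply (t k : Fin N) : Fmat N 0 t k = dftRoot N ^ ((t : ℕ) * k) := by
  rw [Fmat, of_apply, dftRoot, ← Complex.exp_neg, ← Complex.exp_nat_mul]
  congr 1
  push_cast
  ring

lemma conj_Fmat_zero_apply (t k : Fin N) :
    conj (Fmat N 0 t k) = (dftRoot N)⁻¹ ^ ((t : ℕ) * k) := by
  rw [Fmat_zero_apply, map_pow, conj_dftRoot]

lemma Fmat_zero_mul_conjTranspose (N : ℕ) : Fmat N 0 * (Fmat N 0)ᴴ = (N : ℂ) • 1 := by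
  ext t s
  have hω := isPrimitiveRoot_dftRoot (Nat.ne_zero_of_lt t.isLt)
  simp only [mul_apply, conjTranspose_apply, ← starRingEnd_apply, conj_Fmat_zero_apply]
  simp only [Fmat_zero_apply, sum_fin_pow_mul_inv_pow hω]
  simp [one_apply]

variable [NeZero N]

lemma Fmat_zero_mulVec_invF (y : Fin N → ℂ) : Fmat N 0 *ᵥ invF N y = y := by
  rw [invF, mulVec_mulVec, Matrix.mul_smul, Fmat_zero_mul_conjTranspose, smul_smul,
    inv_mul_cancel₀ (NeZero.ne (N : ℂ)), one_smul, one_mulVec]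

lemma Fmat_zero_neg_apply (t k : Fin N) : Fmat N 0 (-t) k = conj (Fmat N 0 t k) := by
  have hω := isPrimitiveRoot_dftRoot (NeZero.ne N)
  have hdvd : N ∣ ((-t : Fin N) : ℕ) + t := by
    rw [Nat.dvd_iff_mod_eq_zero, ← Fin.val_add, neg_add_cancel, Fin.val_zero]
  rw [conj_Fmat_zero_apply, Fmat_zero_apply, inv_pow]
  apply eq_inv_of_mul_eq_one_left
  rw [← pow_add, ← add_mul, hω.pow_eq_one_iff_dvd]
  exact hdvd.mul_right _

lemma Fmat_zero_mulVec_conj (v : Fin N → ℂ) (t : Fin N) :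
    (Fmat N 0 *ᵥ fun k ↦ conj (v k)) t = conj ((Fmat N 0 *ᵥ v) (-t)) := by
  simp only [mulVec, dotProduct, map_sum, map_mul, Fmat_zero_neg_apply, Complex.conj_conj]

lemma onGrid_apply (y : Fin N → ℂ) (t : Fin N) : onGrid N y t = (y t + conj (y (-t))) / 2 := by
  have hre : (fun k ↦ ((invF N y k).re : ℂ)) =
      (2⁻¹ : ℂ) • (invF N y + fun k ↦ conj (invF N y k)) := by
    ext k
    simp only [Complex.re_eq_add_conj, Pi.smul_apply, Pi.add_apply, smul_eq_mul]
    ring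
  rw [onGrid, hre, mulVec_smul, mulVec_add, Pi.smul_apply, Pi.add_apply, Fmat_zero_mulVec_conj,
    Fmat_zero_mulVec_invF, smul_eq_mul, inv_mul_eq_div]

lemma onGrid_add_offGrid (y : Fin N → ℂ) : onGrid N y + offGrid N y = y := by
  have hoff : offGrid N y = Fmat N 0 *ᵥ (Complex.I • fun k ↦ ((invF N y k).im : ℂ)) := by
    rw [mulVec_smul]
    rfl
  have hre_im : (fun k ↦ ((invF N y k).re : ℂ)) + Complex.I • (fun k ↦ ((invF N y k).im : ℂ)) =
      invF N y := by
    ext k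
    simp [mul_comm Complex.I]
  rw [hoff, onGrid, ← mulVec_add, hre_im, Fmat_zero_mulVec_invF]

lemma offGrid_apply (y : Fin N → ℂ) (t : Fin N) :
    offGrid N y t = (y t - conj (y (-t))) / 2 := by
  have hsum : onGrid N y t + offGrid N y t = y t := congrFun (onGrid_add_offGrid y) t
  rw [onGrid_apply] at hsum
  linear_combination hsum

end Fourier

section Tone

/-- The pure tone `exp (-2πi f t)` of frequency `f`, sampled at time `t`. The time is real, so that
it can be shifted and reflected freely. -/
noncomputable def tone (f t : ℝ) : ℂ :=
  Complex.exp (((-(2 * Real.pi * f * t) : ℝ) : ℂ) * Complex.I)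

lemma tone_zero (f : ℝ) : tone f 0 = 1 := by simp [tone]

lemma conj_tone_sub (f s t : ℝ) : conj (tone f (s - t)) = conj (tone f s) * tone f t := by
  simp only [tone, ← Complex.exp_conj, ← Complex.exp_add, map_mul, Complex.conj_ofReal,
    Complex.conj_I]
  congr 1
  push_cast
  ring

lemma conj_tone_of_mul_eq {f s ν : ℝ} {n : ℤ} (h : f * s = n + ν) :
    conj (tone f s) = Complex.exp (((Real.pi * ν : ℝ) : ℂ) * Complex.I) ^ 2 := by
  rw [tone, ← Complex.exp_conj, ← Complex.exp_nat_mul, Complex.exp_eq_exp_iff_exists_int]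
  refine ⟨n, ?_⟩
  have hc : (f : ℂ) * s = n + ν := by exact_mod_cast h
  simp only [map_mul, Complex.conj_ofReal, Complex.conj_I]
  push_cast
  linear_combination (2 * Real.pi * Complex.I) * hc

lemma one_add_exp_mul_I_sq (θ : ℂ) :
    1 + Complex.exp (θ * Complex.I) ^ 2 = 2 * Complex.cos θ * Complex.exp (θ * Complex.I) := by
  have hinv : Complex.exp (-θ * Complex.I) * Complex.exp (θ * Complex.I) = 1 := by
    simp [← Complex.exp_add]
  rw [Complex.two_cos]
  linear_combination -hinv

lemma one_sub_exp_mul_I_sq (θ : ℂ) :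
    1 - Complex.exp (θ * Complex.I) ^ 2 =
      -Complex.I * (2 * Complex.sin θ * Complex.exp (θ * Complex.I)) := by
  have hsin : -Complex.I * (2 * Complex.sin θ) =
      2 * Complex.cos θ - 2 * Complex.exp (θ * Complex.I) := by
    rw [Complex.exp_mul_I]
    ring
  rw [← mul_assoc, hsin]
  linear_combination one_add_exp_mul_I_sq θ

lemma half_tone_add_conj_tone {f s ν : ℝ} {n : ℤ} (h : f * s = n + ν) (t : ℝ) :
    (tone f t + conj (tone f (s - t))) / 2 =
      (Real.cos (Real.pi * ν) : ℂ) *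
        Complex.exp (((Real.pi * ν : ℝ) : ℂ) * Complex.I) * tone f t := by
  rw [conj_tone_sub, conj_tone_of_mul_eq h, Complex.ofReal_cos]
  linear_combination (tone f t / 2) * one_add_exp_mul_I_sq ((Real.pi * ν : ℝ) : ℂ)

lemma half_tone_sub_conj_tone {f s ν : ℝ} {n : ℤ} (h : f * s = n + ν) (t : ℝ) :
    (tone f t - conj (tone f (s - t))) / 2 =
      -Complex.I * ((Real.sin (Real.pi * ν) : ℂ) *
        Complex.exp (((Real.pi * ν : ℝ) : ℂ) * Complex.I) * tone f t) := by
  rw [conj_tone_sub, conj_tone_of_mul_eq h, Complex.ofReal_sin]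
  linear_combination (tone f t / 2) * one_sub_exp_mul_I_sq ((Real.pi * ν : ℝ) : ℂ)

end Tone

section Signal

variable {N : ℕ} [NeZero N] {ι : Type*} [Fintype ι] {p f : ι → ℝ} {y : Fin N → ℂ}

lemma signal_zero (hy : ∀ t : Fin N, y t = ∑ i, (p i : ℂ) * tone (f i) (t : ℕ)) :
    y 0 = ∑ i, (p i : ℂ) := by
  simp [hy, tone_zero]

lemma conj_signal_zero (hy : ∀ t : Fin N, y t = ∑ i, (p i : ℂ) * tone (f i) (t : ℕ)) :
    conj (y 0) = y 0 := by
  simp [signal_zero hy]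

lemma conj_signal_neg (hy : ∀ t : Fin N, y t = ∑ i, (p i : ℂ) * tone (f i) (t : ℕ))
    {t : Fin N} (ht : t ≠ 0) :
    conj (y (-t)) = ∑ i, (p i : ℂ) * conj (tone (f i) (N - (t : ℕ))) := by
  simp [hy, Fin.val_neg, ht, Nat.cast_sub t.isLt.le]

theorem onGrid_offGrid_formulas_general {n : ι → ℤ} {ν : ι → ℝ}
    (hf : ∀ i, f i = (n i + ν i) / N)
    (hy : ∀ t : Fin N, y t = ∑ i, (p i : ℂ) * tone (f i) (t : ℕ)) :
    offGrid N y 0 = 0 ∧ onGrid N y 0 = ∑ i, (p i : ℂ) ∧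
    ∀ t : Fin N, t ≠ 0 →
      offGrid N y t = -Complex.I * ∑ i, (p i : ℂ) * (Real.sin (Real.pi * ν i) : ℂ) *
          Complex.exp ((Real.pi * ν i : ℝ) * Complex.I) * tone (f i) (t : ℕ) ∧
      onGrid N y t = ∑ i, (p i : ℂ) * (Real.cos (Real.pi * ν i) : ℂ) *
          Complex.exp ((Real.pi * ν i : ℝ) * Complex.I) * tone (f i) (t : ℕ) := by
  have hfN (i : ι) : f i * N = n i + ν i := by
    rw [hf, div_mul_cancel₀ _ (NeZero.ne (N : ℝ))]
  refine ⟨?_, ?_, fun t ht ↦ ⟨?_, ?_⟩⟩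
  · rw [offGrid_apply, neg_zero, conj_signal_zero hy, sub_self, zero_div]
  · rw [onGrid_apply, neg_zero, conj_signal_zero hy, add_self_div_two, signal_zero hy]
  · rw [offGrid_apply, conj_signal_neg hy ht, hy, ← Finset.sum_sub_distrib, Finset.sum_div,
      Finset.mul_sum]
    refine Finset.sum_congr rfl fun i _ ↦ ?_
    linear_combination (p i : ℂ) * half_tone_sub_conj_tone (hfN i) (t : ℕ)
  · rw [onGrid_apply, conj_signal_neg hy ht, hy, ← Finset.sum_add_distrib, Finset.sum_div]
    refine Finset.sum_congr rfl fun i _ ↦ ?_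
    linear_combination (p i : ℂ) * half_tone_add_conj_tone (hfN i) (t : ℕ)

end Signal

/-- Explicit formulas for the on-grid and off-grid components of the time-domain signal
`y_t = ∑_{f∈𝓕} p_f exp(−2πi f t)` with `f = (n_f + ν_f)/N`, `n_f ∈ {0,…,N−1}`,
`ν_f ∈ (−1/2, 1/2]`. -/
theorem onGrid_offGrid_formulas (N : ℕ) (hN : 0 < N)
    (ι : Type) [Fintype ι] (nf : ι → ℕ) (hnf : ∀ i, nf i < N)
    (νf : ι → ℝ) (hνf : ∀ i, -(1 / 2) < νf i ∧ νf i ≤ 1 / 2)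
    (p : ι → ℝ) (f : ι → ℝ) (hf : ∀ i, f i = ((nf i : ℝ) + νf i) / (N : ℝ))
    (y : Fin N → ℂ)
    (hy : ∀ t : Fin N, y t = ∑ i, (p i : ℂ) *
        Complex.exp (((-(2 * Real.pi * f i * ((t : ℕ) : ℝ))) : ℝ) * Complex.I)) :
    (offGrid N y ⟨0, hN⟩ = 0) ∧
    (onGrid N y ⟨0, hN⟩ = ∑ i, ((p i : ℝ) : ℂ)) ∧
    (∀ t : Fin N, 1 ≤ (t : ℕ) →
      (offGrid N y t = -Complex.I * ∑ i, (p i : ℂ) *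
          ((Real.sin (Real.pi * νf i) : ℝ) : ℂ) *
          Complex.exp (((Real.pi * νf i) : ℝ) * Complex.I) *
          Complex.exp (((-(2 * Real.pi * f i * ((t : ℕ) : ℝ))) : ℝ) * Complex.I)) ∧
      (onGrid N y t = ∑ i, (p i : ℂ) *
          ((Real.cos (Real.pi * νf i) : ℝ) : ℂ) *
          Complex.exp (((Real.pi * νf i) : ℝ) * Complex.I) *
          Complex.exp (((-(2 * Real.pi * f i * ((t : ℕ) : ℝ))) : ℝ) * Complex.I))) := by
  have : NeZero N := ⟨hN.ne'⟩
  obtain ⟨hoff, hon, h⟩ :=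
    onGrid_offGrid_formulas_general (n := fun i ↦ nf i) (ν := νf) (by simpa using hf) hy
  exact ⟨hoff, hon, fun t ht ↦ h t (Fin.pos_iff_ne_zero.mp ht)⟩
end
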